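/- arXiv:1703.07147 — 2 statements merged into one kernel-verified Lean document; each statement's English description precedes it below -/
import Mathlib

section
/- Let D^b(ℂ) be the bounded derived category of finite-dimensional ℂ-vector spaces. For every object M of D^b(ℂ) and every t ∈ ℝ, one has δ_{D^b(ℂ),t}(ℂ, M) = Σ_{l∈ℤ} (dim_ℂ H^l(M)) · e^{−lt}, where ℂ is regarded as the complex concentrated in degree 0 and H^l denotes l-th cohomology. -/
/-!
Both inequalities come from the long exact cohomology sequence of a distinguished triangle
`A ⟶ B ⟶ ℂ[n] ⟶ A[1]`, where `H^l(ℂ[n])` is one-dimensional for `l = -n` and zero otherwise.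

Lower bound. Attaching `ℂ[n]` raises `dim H^(-n)` by at most one and no other `dim H^l`
(`finrank_attached`). Hence a tower whose top is `M ⊞ N'` contains at least `dim H^l(M)` copies of
`ℂ[-l]` for each `l`, and each of them costs `e^(-l t)` (`weight_le_of_tower`).

Upper bound. If `H^k(M) ≠ 0`, a linear functional vanishing on boundaries but not on some cycle
gives a morphism `M ⟶ ℂ[-k]` which is surjective on cohomology (`exists_map`). In the triangle it
completes to, `A ⟶ M ⟶ ℂ[-k] ⟶ A[1]`, the cohomology of `A` is that of `M` with one dimension removed
in degree `k` (`exists_triangle`). Iterating, one arrives at an acyclic complex, which is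
contractible over a field (`isZero_of_acyclic`). This yields a tower with top `M` and exactly the
required cost (`exists_tower`); it also shows that `M` lies in the thick closure of `ℂ`.
-/

open CategoryTheory Limits Pretriangulated Filter
open scoped ENNReal

universe u v u₂ v₂

namespace CatEntropy

section Defs

variable (C : Type u) [Category.{v} C] [Preadditive C] [HasZeroObject C]
  [HasShift C ℤ] [∀ n : ℤ, (shiftFunctor C n).Additive] [Pretriangulated C]

/-- `C` is of finite type: for all objects `M, N`, the total dimension
`Σ_{n ∈ ℤ} dim_ℂ Hom(M, N⟦n⟧)` is finite. -/
def IsFiniteType [Linear ℂ C] : Prop :=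
  ∀ M N : C, {n : ℤ | ¬ Subsingleton (M ⟶ N⟦n⟧)}.Finite ∧
    ∀ n : ℤ, FiniteDimensional ℂ (M ⟶ N⟦n⟧)

/-- A set of objects is a thick triangulated subcategory: closed under isomorphisms,
shifts, cones and direct summands. -/
structure IsThick (S : Set C) : Prop where
  mem_of_iso : ∀ {X Y : C}, (X ≅ Y) → X ∈ S → Y ∈ S
  shift_mem : ∀ (X : C) (n : ℤ), X ∈ S → X⟦n⟧ ∈ S
  cone_mem : ∀ (T : Triangle C), T ∈ (distTriang C) → T.obj₁ ∈ S → T.obj₂ ∈ S → T.obj₃ ∈ S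
  summand_mem : ∀ (X Y : C), (X ⊞ Y) ∈ S → X ∈ S

/-- `⟨M⟩`, the smallest thick triangulated subcategory containing `M`. -/
def thickClosure (M : C) : Set C :=
  ⋂₀ {S : Set C | IsThick C S ∧ M ∈ S}

/-- `G` is a split-generator of `C` if `⟨G⟩ = C`. -/
def IsSplitGenerator (G : C) : Prop := ∀ X : C, X ∈ thickClosure C G

open Classical in
/-- The complexity `δ_{C,t}(M, N)` of `N` with respect to `M`. -/
noncomputable def complexity (t : ℝ) (M N : C) : ℝ≥0∞ :=
  if IsZero N then 0
  else if N ∈ thickClosure C M then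
    sInf {c : ℝ≥0∞ |
      ∃ (p : ℕ) (_ : 0 < p) (n : Fin p → ℤ) (A : Fin (p + 1) → C) (N' : C),
        IsZero (A 0) ∧ Nonempty (A (Fin.last p) ≅ N ⊞ N') ∧
        (∀ i : Fin p,
          ∃ (f : A i.castSucc ⟶ A i.succ) (g : A i.succ ⟶ M⟦n i⟧)
            (h : M⟦n i⟧ ⟶ (A i.castSucc)⟦(1 : ℤ)⟧),
              Triangle.mk f g h ∈ (distTriang C)) ∧
        c = ∑ i : Fin p, ENNReal.ofReal (Real.exp ((n i : ℝ) * t))}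
  else ⊤

/-- Iterated composition `Fⁿ` of an endofunctor. -/
def iter (F : C ⥤ C) : ℕ → C ⥤ C
  | 0 => 𝟭 C
  | n + 1 => iter F n ⋙ F

/-- The entropy `h_t(F)` of an endofunctor `F`, computed with the split-generator `G`
(the defining limit exists and agrees with the `limsup` used here). -/
noncomputable def entropy (F : C ⥤ C) (G : C) (t : ℝ) : EReal :=
  Filter.atTop.limsup fun m : ℕ =>
    (((m : ℝ)⁻¹ : ℝ) : EReal) * (complexity C t G ((iter C F m).obj G)).log

end Defs


section DbC

/-- Since every complex of vector spaces splits, the bounded derived category `D^b(ℂ)` of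
finite-dimensional ℂ-vector spaces is (triangle-equivalently) the full subcategory of the
homotopy category of complexes of ℂ-vector spaces consisting of the objects with
finite-dimensional cohomology concentrated in finitely many degrees; complexities of such
objects may be computed in the ambient homotopy category. -/
noncomputable instance : Limits.HasZeroObject (ModuleCat.{0} ℂ) := by infer_instance

/-- The homotopy category of complexes of ℂ-vector spaces, in which `D^b(ℂ)` sits as the
full subcategory of objects with bounded finite-dimensional cohomology. -/
abbrev KVect := HomotopyCategory (ModuleCat.{0} ℂ) (ComplexShape.up ℤ)

/-- `ℂ`, seen as the complex concentrated in degree `0`. -/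
noncomputable def CC : KVect :=
  (HomotopyCategory.quotient (ModuleCat.{0} ℂ) (ComplexShape.up ℤ)).obj
    ((HomologicalComplex.single (ModuleCat.{0} ℂ) (ComplexShape.up ℤ) 0).obj
      (ModuleCat.of ℂ ℂ))

/-- The `l`-th cohomology functor. -/
noncomputable def Hl (l : ℤ) : KVect ⥤ ModuleCat.{0} ℂ :=
  HomotopyCategory.homologyFunctor (ModuleCat.{0} ℂ) (ComplexShape.up ℤ) l


/-! ### Cohomology of complexes of vector spaces -/

/-- The quotient functor from cochain complexes to the homotopy category. -/
abbrev Q : CochainComplex (ModuleCat.{0} ℂ) ℤ ⥤ KVect :=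
  HomotopyCategory.quotient (ModuleCat.{0} ℂ) (ComplexShape.up ℤ)

/-- The cohomology of the class of a complex in the homotopy category is that of the complex. -/
noncomputable def HlQ (l : ℤ) :
    Q ⋙ Hl l ≅ HomologicalComplex.homologyFunctor (ModuleCat.{0} ℂ) (ComplexShape.up ℤ) l :=
  HomotopyCategory.homologyFunctorFactors (ModuleCat.{0} ℂ) (ComplexShape.up ℤ) l

/-- The complex `ℂ` concentrated in degree `k`. -/
noncomputable abbrev singleC (k : ℤ) : CochainComplex (ModuleCat.{0} ℂ) ℤ :=
  (HomologicalComplex.single (ModuleCat.{0} ℂ) (ComplexShape.up ℤ) k).obj (ModuleCat.of ℂ ℂ)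

/-- An acyclic complex of vector spaces is contractible. -/
theorem isZero_of_acyclic (M : KVect) (h : ∀ l, IsZero ((Hl l).obj M)) : IsZero M := by
  obtain ⟨X⟩ := M
  have hex : ∀ l, X.ExactAt l := by
    intro l
    rw [HomologicalComplex.exactAt_iff_isZero_homology]
    exact (h l).of_iso ((HlQ l).app X).symm
  have ht : ∀ j i : ℤ, ∃ t : X.X j ⟶ X.X i, i + 1 = j →
      ∀ z : X.X j, X.d j (j + 1) z = 0 → X.d i j (t z) = z := by
    intro j i
    by_cases hij : i + 1 = j
    · have h1 := (X.exactAt_iff' i j (j + 1) (by simp; omega) (by simp)).1 (hex j)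
      rw [ShortComplex.moduleCat_exact_iff] at h1
      obtain ⟨s, hs⟩ := (X.d i j).hom.rangeRestrict.exists_rightInverse_of_surjective
        (LinearMap.range_eq_top.2 (X.d i j).hom.surjective_rangeRestrict)
      obtain ⟨t, ht⟩ := s.exists_extend
      refine ⟨ModuleCat.ofHom t, fun _ z hz => ?_⟩
      obtain ⟨y, hy⟩ := h1 z hz
      have h2 := LinearMap.congr_fun ht ⟨z, ⟨y, hy⟩⟩
      have h3 := congrArg Subtype.val (LinearMap.congr_fun hs ⟨z, ⟨y, hy⟩⟩)
      have h4 : t z = s ⟨z, ⟨y, hy⟩⟩ := h2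
      change X.d i j (t z) = z
      rw [h4]
      exact h3
    · exact ⟨0, fun h => absurd h hij⟩
  choose t ht using ht
  -- `t` inverts the differential on cycles only, and need not satisfy `d t + t d = 1`. Since
  -- `d t` is a projection onto the cycles, `(1 - d t) t` is a contracting homotopy.
  have hz : Q.map (𝟙 X) =
      Q.map 0 := by
    refine HomotopyCategory.eq_of_homotopy _ _ ?_
    refine
      { hom := fun j i => if i + 1 = j then t j i - t j i ≫ t i (i - 1) ≫ X.d (i - 1) i else 0
        zero := fun j i hij => if_neg (by simpa using hij)
        comm := fun j => ?_ }
    rw [dNext_eq _ (show (ComplexShape.up ℤ).Rel j (j + 1) by simp),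
      prevD_eq _ (show (ComplexShape.up ℤ).Rel (j - 1) j by simp)]
    rw [if_pos rfl, if_pos (by omega)]
    ext x
    have e1 := ht (j + 1) j rfl (X.d j (j + 1) x) (by
      exact congr($(X.d_comp_d j (j + 1) (j + 1 + 1)) x))
    have e2 := ht j (j - 1) (by omega) (t (j+1) j (X.d j (j+1) x) - x) (by
      rw [map_sub, e1, sub_self])
    simp only [map_sub] at e2
    simp
    rw [sub_add]
    exact (sub_sub_cancel _ x).symm.trans (congrArg _ e2.symm)
  refine (IsZero.iff_id_eq_zero _).2 ?_
  exact (Q.map_id X).symm.trans (hz.trans (Functor.map_zero _ _ _))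

theorem singleIso (n : ℤ) : Nonempty (CC⟦n⟧ ≅ Q.obj (singleC (-n))) :=
  ⟨((HomotopyCategory.singleFunctors (ModuleCat.{0} ℂ)).shiftIso n (-n) 0 (by simp)).app
    (ModuleCat.of ℂ ℂ)⟩

theorem isZero_Hl_shift (n l : ℤ) (h : l ≠ -n) : IsZero ((Hl l).obj (CC⟦n⟧)) := by
  obtain ⟨e⟩ := singleIso n
  exact (HomologicalComplex.isZero_single_obj_homology _ _ _ _ h).of_iso
    ((Hl l).mapIso e ≪≫ (HlQ l).app _)

theorem Hl_shift_iso (n : ℤ) : Nonempty ((Hl (-n)).obj (CC⟦n⟧) ≅ ModuleCat.of ℂ ℂ) := by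
  obtain ⟨e⟩ := singleIso n
  exact ⟨(Hl (-n)).mapIso e ≪≫ (HlQ _).app _ ≪≫
    HomologicalComplex.singleObjHomologySelfIso _ _ _⟩

theorem finite_Hl_shift (n l : ℤ) : FiniteDimensional ℂ ((Hl l).obj (CC⟦n⟧)) := by
  by_cases h : l = -n
  · subst h
    obtain ⟨e⟩ := Hl_shift_iso n
    exact Module.Finite.equiv (e.toLinearEquiv.symm)
  · have := ModuleCat.subsingleton_of_isZero (isZero_Hl_shift n l h)
    infer_instance

theorem finrank_Hl_shift (n l : ℤ) :
    Module.finrank ℂ ((Hl l).obj (CC⟦n⟧)) = if l = -n then 1 else 0 := by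
  split_ifs with h
  · subst h
    obtain ⟨e⟩ := Hl_shift_iso n
    rw [e.toLinearEquiv.finrank_eq]
    exact Module.finrank_self ℂ
  · have := ModuleCat.subsingleton_of_isZero (isZero_Hl_shift n l h)
    exact Module.finrank_zero_of_subsingleton

/-- A nonzero cohomology class of `M` in degree `k` is detected by a morphism `M ⟶ ℂ[-k]`: a linear
functional on the degree `k` term which kills the boundaries but not a chosen cycle. -/
theorem exists_map (M : KVect) (k : ℤ) (hk : ¬ IsZero ((Hl k).obj M)) :
    ∃ g : M ⟶ CC⟦-k⟧, (Hl k).map g ≠ 0 := by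
  obtain ⟨X⟩ := M
  have hex : ¬ X.ExactAt k := by
    intro h
    rw [HomologicalComplex.exactAt_iff_isZero_homology] at h
    exact hk (h.of_iso ((HlQ k).app X))
  rw [X.exactAt_iff' (k - 1) k (k + 1) (by simp) (by simp),
    ShortComplex.moduleCat_exact_iff] at hex
  push Not at hex
  obtain ⟨z, hz, hzr⟩ := hex
  change X.d k (k + 1) z = 0 at hz
  obtain ⟨φ, hφz, hφ⟩ := Submodule.exists_le_ker_of_notMem
    (p := LinearMap.range (X.d (k - 1) k).hom) (v := z) (by rintro ⟨y, hy⟩; exact hzr y hy)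
  let ψ : X ⟶ singleC k := HomologicalComplex.mkHomToSingle (ModuleCat.ofHom φ) (by
    intro i hi
    obtain rfl : i = k - 1 := by simp at hi; omega
    ext y
    exact hφ ⟨y, rfl⟩)
  have hψ : HomologicalComplex.homologyMap ψ k ≠ 0 := by
    intro h0
    -- On `singleC k` the map from cycles to homology is an isomorphism, so if `ψ` is zero on
    -- homology, then `φ` vanishes on all cycles, in particular on `z`.
    have h1 := HomologicalComplex.homologyπ_naturality ψ k
    rw [h0, comp_zero] at h1
    have h2 : HomologicalComplex.cyclesMap ψ k = 0 := by
      have : IsIso ((singleC k).homologyπ k) :=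
        HomologicalComplex.isIso_homologyπ _ (k - 1) k (by simp) rfl
      rw [← cancel_mono ((singleC k).homologyπ k), zero_comp, ← h1]
    have h3 := HomologicalComplex.cyclesMap_i ψ k
    rw [h2, zero_comp, HomologicalComplex.mkHomToSingle_f, ← Category.assoc] at h3
    have h4 : X.iCycles k ≫ ModuleCat.ofHom φ = 0 := by
      rw [← cancel_mono (HomologicalComplex.singleObjXSelf (ComplexShape.up ℤ) k
        (ModuleCat.of ℂ ℂ)).inv, zero_comp, ← h3]
    let zz : ModuleCat.of ℂ ℂ ⟶ X.X k := ModuleCat.ofHom (LinearMap.toSpanSingleton ℂ _ z)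
    have hzz : zz ≫ X.d k (k + 1) = 0 := by
      ext
      change X.d k (k + 1) ((1 : ℂ) • z) = 0
      rw [one_smul, hz]
    have h5 : zz ≫ ModuleCat.ofHom φ = 0 := by
      rw [← X.liftCycles_i zz (k + 1) (by simp) hzz, Category.assoc, h4, comp_zero]
    apply hφz
    have h6 : φ ((1 : ℂ) • z) = 0 := congr($h5 (1 : ℂ))
    rwa [one_smul] at h6
  obtain ⟨e⟩ := singleIso (-k)
  rw [neg_neg] at e
  refine ⟨Q.map ψ ≫ e.inv, fun h0 => hψ ?_⟩
  replace h0 : (Hl k).map (Q.map ψ) ≫ (Hl k).map e.inv = 0 :=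
    ((Hl k).map_comp _ _).symm.trans h0
  have h1 : (Hl k).map (Q.map ψ) = 0 := by
    rw [← cancel_mono ((Hl k).map e.inv), h0, zero_comp]
  have h2 := (HlQ k).hom.naturality ψ
  have h3 : (Q ⋙ Hl k).map ψ = 0 := h1
  rw [h3, zero_comp] at h2
  exact (cancel_epi ((HlQ k).hom.app X)).1 (h2.symm.trans comp_zero.symm)

/-! ### The upper bound: building a tower of minimal cost -/

/-- `B` is obtained from `A` by attaching one shifted copy `ℂ[n]`: there is a distinguished triangle
`A ⟶ B ⟶ ℂ[n] ⟶ A[1]`. -/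
def IsAttached (A B : KVect) (n : ℤ) : Prop :=
  ∃ (f : A ⟶ B) (g : B ⟶ CC⟦n⟧) (h : CC⟦n⟧ ⟶ A⟦(1 : ℤ)⟧), Triangle.mk f g h ∈ (distTriang KVect)

/-- The weighted total dimension `∑ dim H^l(M) · e^{-l t}` of the cohomology of `M`. -/
noncomputable def weight (t : ℝ) (M : KVect) : ℝ≥0∞ :=
  ∑' l : ℤ, ENNReal.ofReal ((Module.finrank ℂ ((Hl l).obj M) : ℝ) * Real.exp (-(l : ℝ) * t))

noncomputable instance : (Hl 0).ShiftSequence ℤ :=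
  inferInstanceAs
    ((HomotopyCategory.homologyFunctor (ModuleCat.{0} ℂ) (ComplexShape.up ℤ) 0).ShiftSequence ℤ)

instance (l : ℤ) : (Hl l).IsHomological :=
  inferInstanceAs
    (HomotopyCategory.homologyFunctor (ModuleCat.{0} ℂ) (ComplexShape.up ℤ) l).IsHomological

/-- If `H^k(M) ≠ 0`, one copy of `ℂ[-k]` can be peeled off `M`, which lowers the dimension of `H^k`
by one and leaves the other cohomology dimensions unchanged. -/
theorem exists_triangle (M : KVect) (k : ℤ) (hk : ¬ IsZero ((Hl k).obj M))
    (hfd : ∀ l : ℤ, FiniteDimensional ℂ ((Hl l).obj M)) :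
    ∃ A : KVect, IsAttached A M (-k) ∧ ∀ l, FiniteDimensional ℂ ((Hl l).obj A) ∧
      Module.finrank ℂ ((Hl l).obj M) =
        Module.finrank ℂ ((Hl l).obj A) + if l = k then 1 else 0 := by
  obtain ⟨g, hg⟩ := exists_map M k hk
  have hsurj : ∀ l, Function.Surjective ((Hl l).map g).hom := by
    intro l
    by_cases h : l = k
    · subst h
      have : IsSimpleModule ℂ ((Hl l).obj (CC⟦-l⟧)) :=
        isSimpleModule_iff_finrank_eq_one.2 (by rw [finrank_Hl_shift, if_pos (by simp)])
      exact LinearMap.surjective_of_ne_zero fun h0 => hg (ModuleCat.hom_ext h0)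
    · have := ModuleCat.subsingleton_of_isZero (isZero_Hl_shift (-k) l (by simpa using h))
      exact Function.surjective_to_subsingleton _
  obtain ⟨A, f, h, hT⟩ := distinguished_cocone_triangle₁ g
  refine ⟨A, ⟨f, g, h, hT⟩, fun l => ?_⟩
  have hex := ShortComplex.Exact.moduleCat_range_eq_ker
    ((Hl l).map_distinguished_exact _ hT)
  change LinearMap.range ((Hl l).map f).hom = LinearMap.ker ((Hl l).map g).hom at hex
  -- Long exact sequence: `H^(l-1)(M) ⟶ H^(l-1)(ℂ[-k])` is onto, so the connecting map is zero.
  have hmono : Mono ((Hl l).map f) := by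
    have : Epi ((Hl (l - 1)).map g) := (ModuleCat.epi_iff_surjective _).2 (hsurj _)
    refine ((Hl 0).homologySequence_mono_shift_map_mor₁_iff _ hT (l - 1) l (by simp)).2 ?_
    refine ((Hl 0).homologySequence_epi_shift_map_mor₂_iff _ hT (l - 1) l (by simp)).1 this
  have hinj : Function.Injective ((Hl l).map f).hom := (ModuleCat.mono_iff_injective _).1 hmono
  have := hfd l
  refine ⟨FiniteDimensional.of_injective _ hinj, ?_⟩
  have h1 := LinearMap.finrank_range_add_finrank_ker ((Hl l).map g).hom
  rw [← hex, LinearMap.finrank_range_of_inj hinj, LinearMap.range_eq_top.2 (hsurj l), finrank_top,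
    finrank_Hl_shift, neg_neg] at h1
  rw [← h1, add_comm]

/-- Peeling off one copy of a shift of `ℂ` at a time exhausts `M`; here `d` is the total dimension of
the cohomology of `M`, which is supported in `s`. The resulting tower has cost `weight t M`. -/
theorem exists_tower (t : ℝ) (s : Finset ℤ) (d : ℕ) : ∀ (M : KVect)
    (_ : ∀ l ∉ s, IsZero ((Hl l).obj M)) (_ : ∀ l, FiniteDimensional ℂ ((Hl l).obj M))
    (_ : ∑ l ∈ s, Module.finrank ℂ ((Hl l).obj M) = d),
    ∃ (n : Fin d → ℤ) (A : Fin (d + 1) → KVect), IsZero (A 0) ∧ A (Fin.last d) = M ∧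
      (∀ i : Fin d, IsAttached (A i.castSucc) (A i.succ) (n i)) ∧
      ∑ i : Fin d, ENNReal.ofReal (Real.exp ((n i : ℝ) * t)) = weight t M := by
  induction d with
  | zero =>
    intro M hs hfd hd
    have hr : ∀ l, Module.finrank ℂ ((Hl l).obj M) = 0 := by
      intro l
      by_cases hl : l ∈ s
      · exact Finset.sum_eq_zero_iff.1 hd l hl
      · have := ModuleCat.subsingleton_of_isZero (hs l hl)
        exact Module.finrank_zero_of_subsingleton
    refine ⟨Fin.elim0, fun _ => M, ?_, rfl, fun i => i.elim0, ?_⟩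
    · refine isZero_of_acyclic M fun l => ?_
      have := Module.finrank_zero_iff.1 (hr l)
      exact ModuleCat.isZero_of_subsingleton _
    · simp [weight, hr]
  | succ d ih =>
    intro M hs hfd hd
    obtain ⟨k, hks, hk⟩ : ∃ k ∈ s, Module.finrank ℂ ((Hl k).obj M) ≠ 0 :=
      Finset.exists_ne_zero_of_sum_ne_zero (by rw [hd]; omega)
    obtain ⟨A, hA, hAM⟩ := exists_triangle M k (fun h => hk (by
      have := ModuleCat.subsingleton_of_isZero h
      exact Module.finrank_zero_of_subsingleton)) hfd
    obtain ⟨n, B, hB0, hBl, hB, hBs⟩ := ih A (by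
        intro l hl
        have h1 := (hAM l).2
        have := (hAM l).1
        have := ModuleCat.subsingleton_of_isZero (hs l hl)
        rw [Module.finrank_zero_of_subsingleton] at h1
        have := Module.finrank_zero_iff.1 (show Module.finrank ℂ ((Hl l).obj A) = 0 by omega)
        exact ModuleCat.isZero_of_subsingleton _)
      (fun l => (hAM l).1) (by
        rw [Finset.sum_congr rfl (fun l _ => (hAM l).2), Finset.sum_add_distrib,
          Finset.sum_ite_eq' s k, if_pos hks] at hd
        omega)
    refine ⟨Fin.snoc (α := fun _ => ℤ) n (-k), Fin.snoc (α := fun _ => KVect) B M, ?_, ?_, ?_, ?_⟩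
    · rw [← Fin.castSucc_zero, Fin.snoc_castSucc]
      exact hB0
    · rw [Fin.snoc_last]
    · intro i
      refine Fin.lastCases ?_ (fun i => ?_) i
      · rw [Fin.snoc_castSucc, Fin.succ_last, Fin.snoc_last, Fin.snoc_last, hBl]
        exact hA
      · rw [Fin.snoc_castSucc, Fin.succ_castSucc, Fin.snoc_castSucc, Fin.snoc_castSucc]
        exact hB i
    · rw [Fin.sum_univ_castSucc]
      simp only [Fin.snoc_castSucc, Fin.snoc_last, hBs]
      have hterm : ∀ l : ℤ, ENNReal.ofReal
          ((Module.finrank ℂ ((Hl l).obj M) : ℝ) * Real.exp (-(l : ℝ) * t)) =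
          ENNReal.ofReal ((Module.finrank ℂ ((Hl l).obj A) : ℝ) * Real.exp (-(l : ℝ) * t)) +
            if l = k then ENNReal.ofReal (Real.exp (-(k : ℝ) * t)) else 0 := by
        intro l
        rw [(hAM l).2, Nat.cast_add, add_mul, ENNReal.ofReal_add (by positivity) (by positivity)]
        congr 1
        split_ifs with h
        · subst h; simp
        · simp
      simp only [weight, hterm]
      rw [ENNReal.tsum_add, tsum_ite_eq]
      simp

theorem mem_thickClosure_of_tower {p : ℕ} (n : Fin p → ℤ) (A : Fin (p + 1) → KVect)
    (h0 : IsZero (A 0)) (hA : ∀ i : Fin p, IsAttached (A i.castSucc) (A i.succ) (n i)) :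
    A (Fin.last p) ∈ thickClosure KVect CC := by
  rintro S ⟨hS, hC⟩
  suffices h : ∀ i, A i ∈ S from h _
  intro i
  induction i using Fin.induction with
  | zero =>
    have h1 := hS.cone_mem _ (contractible_distinguished CC) hC hC
    exact hS.mem_of_iso ((isZero_zero _).iso h0) h1
  | succ i ih =>
    obtain ⟨f, g, h, hT⟩ := hA i
    exact hS.cone_mem _ (inv_rot_of_distTriang _ hT)
      (hS.shift_mem _ (-1) (hS.shift_mem _ (n i) hC)) ih

/-! ### The lower bound -/

/-- Attaching `ℂ[n]` raises the dimension of `H^(-n)` by at most one, and that of no other `H^l`. -/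
theorem finrank_attached {A B : KVect} {n : ℤ} (h : IsAttached A B n) (l : ℤ)
    [FiniteDimensional ℂ ((Hl l).obj A)] :
    FiniteDimensional ℂ ((Hl l).obj B) ∧ Module.finrank ℂ ((Hl l).obj B) ≤
      Module.finrank ℂ ((Hl l).obj A) + if n = -l then 1 else 0 := by
  obtain ⟨f, g, h, hT⟩ := h
  have hex := ShortComplex.Exact.moduleCat_range_eq_ker
    ((Hl l).map_distinguished_exact _ hT)
  change LinearMap.range ((Hl l).map f).hom = LinearMap.ker ((Hl l).map g).hom at hex
  have := finite_Hl_shift n l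
  have hk : FiniteDimensional ℂ (LinearMap.ker ((Hl l).map g).hom) := by
    rw [← hex]; infer_instance
  have hq : FiniteDimensional ℂ (_ ⧸ LinearMap.ker ((Hl l).map g).hom) :=
    Module.Finite.equiv ((Hl l).map g).hom.quotKerEquivRange.symm
  have hB : FiniteDimensional ℂ ((Hl l).obj B) :=
    Module.Finite.of_submodule_quotient (LinearMap.ker ((Hl l).map g).hom)
  refine ⟨hB, ?_⟩
  have h1 := LinearMap.finrank_range_add_finrank_ker ((Hl l).map g).hom
  have h2 := LinearMap.finrank_range_le ((Hl l).map f).hom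
  have h3 := Submodule.finrank_le (LinearMap.range ((Hl l).map g).hom)
  rw [finrank_Hl_shift] at h3
  rw [← hex] at h1
  have : (if l = -n then 1 else 0) = (if n = -l then 1 else 0) := by
    congr 1; exact propext ⟨fun h => by omega, fun h => by omega⟩
  omega

/-- At the top of a tower, `dim H^l` is at most the number of attached copies of `ℂ[-l]`. -/
theorem finrank_tower {p : ℕ} (n : Fin p → ℤ) (A : Fin (p + 1) → KVect)
    (h0 : IsZero (A 0)) (hA : ∀ i : Fin p, IsAttached (A i.castSucc) (A i.succ) (n i)) (l : ℤ) :
    FiniteDimensional ℂ ((Hl l).obj (A (Fin.last p))) ∧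
      Module.finrank ℂ ((Hl l).obj (A (Fin.last p))) ≤ ∑ i, if n i = -l then 1 else 0 := by
  induction p with
  | zero =>
    have := ModuleCat.subsingleton_of_isZero ((Hl l).map_isZero h0)
    exact ⟨inferInstanceAs (FiniteDimensional ℂ ((Hl l).obj (A 0))),
      (Module.finrank_zero_of_subsingleton (M := (Hl l).obj (A 0))).le⟩
  | succ p ih =>
    obtain ⟨h1, h2⟩ := ih (fun i => n i.castSucc) (fun i => A i.castSucc) h0
      (fun i => hA i.castSucc)
    obtain ⟨h3, h4⟩ := finrank_attached (hA (Fin.last p)) l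
    refine ⟨h3, h4.trans ?_⟩
    rw [Fin.sum_univ_castSucc]
    gcongr

/-- Every tower admissible in the definition of the complexity of `M` costs at least `weight t M`. -/
theorem weight_le_of_tower (t : ℝ) (M : KVect) {p : ℕ} (n : Fin p → ℤ) (A : Fin (p + 1) → KVect)
    (N' : KVect) (h0 : IsZero (A 0)) (e : A (Fin.last p) ≅ M ⊞ N')
    (hA : ∀ i : Fin p, IsAttached (A i.castSucc) (A i.succ) (n i)) :
    weight t M ≤ ∑ i : Fin p, ENNReal.ofReal (Real.exp ((n i : ℝ) * t)) := by
  have hle : ∀ l, Module.finrank ℂ ((Hl l).obj M) ≤ ∑ i, if n i = -l then 1 else 0 := by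
    intro l
    obtain ⟨hf, hr⟩ := finrank_tower n A h0 hA l
    refine le_trans ?_ hr
    have hm : Mono ((Hl l).map (biprod.inl ≫ e.inv : M ⟶ A (Fin.last p))) := by
      have : IsSplitMono (biprod.inl ≫ e.inv : M ⟶ A (Fin.last p)) :=
        IsSplitMono.mk' ⟨e.hom ≫ biprod.fst, by simp⟩
      infer_instance
    exact LinearMap.finrank_le_finrank_of_injective ((ModuleCat.mono_iff_injective _).1 hm)
  calc weight t M ≤ ∑' l : ℤ, ∑ i : Fin p,
        if l = -n i then ENNReal.ofReal (Real.exp ((n i : ℝ) * t)) else 0 := by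
        refine ENNReal.tsum_le_tsum fun l => ?_
        calc _ ≤ ENNReal.ofReal (((∑ i, if n i = -l then 1 else 0 : ℕ) : ℝ) *
                Real.exp (-(l : ℝ) * t)) := by
              refine ENNReal.ofReal_le_ofReal ?_
              gcongr
              exact hle l
          _ = ∑ i, ENNReal.ofReal (if n i = -l then Real.exp (-(l : ℝ) * t) else 0) := by
              rw [← ENNReal.ofReal_sum_of_nonneg (fun i _ => by positivity)]
              congr 1
              push_cast
              rw [Finset.sum_mul]
              simp
          _ ≤ _ := by
              refine Finset.sum_le_sum fun i _ => ?_
              by_cases h : l = -n i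
              · subst h; simp
              · rw [if_neg h, if_neg (by omega)]; simp
    _ = ∑ i : Fin p, ENNReal.ofReal (Real.exp ((n i : ℝ) * t)) := by
        rw [Summable.tsum_finsetSum (fun _ _ => ENNReal.summable)]
        simp only [tsum_ite_eq]

/-- For every object `M` of `D^b(ℂ)`,
`δ_(D^b(ℂ),t)(ℂ, M) = Σ_{l ∈ ℤ} (dim_ℂ H^l(M)) · e^{-l t}`. -/
theorem statement_6 (M : KVect)
    (hbdd : {l : ℤ | ¬ IsZero ((Hl l).obj M)}.Finite)
    (hfd : ∀ l : ℤ, FiniteDimensional ℂ ((Hl l).obj M))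
    (t : ℝ) :
    complexity KVect t CC M =
      ∑' l : ℤ, ENNReal.ofReal
        ((Module.finrank ℂ ((Hl l).obj M) : ℝ) * Real.exp (-(l : ℝ) * t)) := by
  change complexity KVect t CC M = weight t M
  by_cases hM : IsZero M
  · have hr : ∀ l, Module.finrank ℂ ((Hl l).obj M) = 0 := by
      intro l
      have := ModuleCat.subsingleton_of_isZero ((Hl l).map_isZero hM)
      exact Module.finrank_zero_of_subsingleton
    simp [complexity, hM, weight, hr]
  obtain ⟨n, A, h0, hl, hA, hsum⟩ := exists_tower t hbdd.toFinset _ M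
    (fun l hl => by simpa using hl) hfd rfl
  generalize (∑ l ∈ hbdd.toFinset, Module.finrank ℂ ((Hl l).obj M)) = d at n A h0 hl hA hsum
  subst hl
  rw [complexity, if_neg hM, if_pos (mem_thickClosure_of_tower n A h0 hA)]
  refine le_antisymm (sInf_le ?_) (le_sInf ?_)
  -- The zero object `A 0` serves as the complementary summand.
  · refine ⟨d, Nat.pos_of_ne_zero ?_, n, A, A 0, h0, ⟨?_⟩, hA, hsum.symm⟩
    · rintro rfl
      exact hM h0
    · exact isoBiprodZero h0
  · rintro c ⟨p, -, n', A', N', h0', ⟨e⟩, hA', rfl⟩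
    exact weight_le_of_tower t _ n' A' N' h0' e hA'

end DbC

end CatEntropy
end

section
/- Let T be a ℂ-linear triangulated category of finite type, G and G' two split-generators of T, and F a triangulated endofunctor of T with FⁿG ≇ 0 for all n ≥ 0. Then for every t ∈ ℝ, the entropy of F is given by h_t(F) = lim_{n→∞} (1/n) log δ_{T,t}(G, FⁿG'). -/
/-!
The complexity satisfies `δ(G, X) ≤ δ(M, X) δ(G, M)` and `δ(F M, F X) ≤ δ(M, X)`, both finite for
split-generators. Hence `c n = δ(G, Fⁿ G)` is submultiplicative, and with `c' n = δ(G, Fⁿ G')` one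
has `c' n ≤ δ(G, G') c n` and `c n ≤ δ(G', G) c' n`. A version of Fekete's lemma
(`tendsto_of_submul`) then shows that `(1/n) log c' n` converges to the upper limit of
`(1/n) log c n`, which is the entropy.

The triangle inequality `δ(G, X) ≤ δ(M, X) δ(G, M)` (`towerCost_le_mul`) is obtained by replacing
each step `M⟦n⟧` of a tower for `X` by a shifted tower for `M`. This concatenation of towers
(`Tower.ext`) usually rests on the octahedral axiom, whereas the category here is only assumed
pretriangulated. The finite type hypothesis makes up for this:

* An object `M` is determined up to isomorphism by the dimensions of the spaces `Hom(Z, M)`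
  (`nonempty_iso_of_finrank_eq`). This is an analogue of a theorem of Auslander and Bongartz. If
  `M` and `N` have the same dimensions, so do the complements of a maximal common summand. The
  ranks in the long exact sequences are then the same for both complements, so that the cone of an
  approximation `M ⟶ N ^ r` shows that the identity of the complement of `M` is a sum of maps
  factoring through the complement of `N`. By maximality these are nilpotent, and a comparison of
  traces shows that the complement vanishes. As idempotents need not split, complements are
  handled through idempotents.
* In a homotopy cartesian square, the Mayer–Vietoris sequence shows that the cones of parallel
  sides have the same Hom dimensions, so they are isomorphic (`nonempty_iso_cone`).
* Consequently, if `E` is an extension of `B` by `A` and `B` one of `M` by `B'`, then the homotopy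
  pullback `D` of `E` and `B'` over `B` is an extension of `B'` by `A`, and `E` is an extension of
  `M` by `D` (`IsExt.assoc`). This weak octahedral axiom suffices for towers.

Direct summands are dealt with by `IsExt.retract`: an extension of retracts is a retract of an
extension.
-/

open CategoryTheory Limits Pretriangulated Filter
open scoped ENNReal

universe u v u₂ v₂

namespace CatEntropy

set_option linter.unusedSectionVars false

/-! ### Fekete's lemma -/

section Analysis

/-- `(1/m) log c ≤ s` expressed multiplicatively, for `m ≥ 1`. -/
lemma inv_mul_log_le_iff {m : ℕ} (hm : 0 < m) (c : ℝ≥0∞) (s : ℝ) :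
    (((m : ℝ)⁻¹ : ℝ) : EReal) * c.log ≤ (s : EReal) ↔ c ≤ ENNReal.ofReal (Real.exp (s * m)) := by
  have hm' : (0 : ℝ) < m := by exact_mod_cast hm
  have h1 : (ENNReal.ofReal (Real.exp (s * m))).log = ((s * m : ℝ) : EReal) := by
    rw [ENNReal.log_ofReal_of_pos (Real.exp_pos _), Real.log_exp]
  rw [← ENNReal.log_le_log_iff (x := c), h1]
  have hpos : (0 : ℝ) < (m : ℝ)⁻¹ := inv_pos.2 hm'
  induction c.log using EReal.rec with
  | bot => simp [EReal.coe_mul_bot_of_pos hpos]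
  | top =>
    rw [EReal.coe_mul_top_of_pos hpos]
    simp only [top_le_iff, EReal.coe_ne_top]
  | coe x =>
    rw [← EReal.coe_mul, EReal.coe_le_coe_iff, EReal.coe_le_coe_iff, inv_mul_le_iff₀ hm', mul_comm s]

/-- A constant is eventually absorbed by a strictly larger exponential rate. -/
lemma eventually_const_mul_exp_le {K : ℝ≥0∞} (hK : K ≠ ⊤) {s s' : ℝ} (h : s < s') :
    ∀ᶠ m : ℕ in atTop,
      K * ENNReal.ofReal (Real.exp (s * m)) ≤ ENNReal.ofReal (Real.exp (s' * m)) := by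
  have h1 : Tendsto (fun m : ℕ => Real.exp ((s' - s) * m)) atTop atTop :=
    Real.tendsto_exp_atTop.comp
      (Tendsto.const_mul_atTop (sub_pos.2 h) tendsto_natCast_atTop_atTop)
  filter_upwards [h1.eventually_ge_atTop K.toReal] with m hm
  rw [← ENNReal.ofReal_toReal hK, ← ENNReal.ofReal_mul ENNReal.toReal_nonneg]
  apply ENNReal.ofReal_le_ofReal
  calc K.toReal * Real.exp (s * m) ≤ Real.exp ((s' - s) * m) * Real.exp (s * m) := by gcongr
    _ = Real.exp (s' * m) := by rw [← Real.exp_add]; ring_nf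

/-- The Fekete step: one good bound on a submultiplicative sequence propagates, up to a constant,
to the whole sequence. -/
lemma submul_bound {c : ℕ → ℝ≥0∞} (hc : ∀ n, c n ≠ ⊤) (hsub : ∀ m n, c (m + n) ≤ c m * c n)
    {k : ℕ} (hk : 0 < k) {s : ℝ} (hs : c k ≤ ENNReal.ofReal (Real.exp (s * k))) :
    ∃ R : ℝ≥0∞, R ≠ ⊤ ∧ ∀ n, c n ≤ R * ENNReal.ofReal (Real.exp (s * n)) := by
  -- division of `n` by `k` with remainder `r`: the constant accounts for the remainder
  refine ⟨∑ r ∈ Finset.range k, c r * ENNReal.ofReal (Real.exp (-(s * r))), ?_, ?_⟩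
  · exact ENNReal.sum_ne_top.2 fun r _ => ENNReal.mul_ne_top (hc r) ENNReal.ofReal_ne_top
  intro n
  induction n using Nat.strong_induction_on with
  | _ n ih =>
    by_cases hn : n < k
    · have h1 : c n = c n * ENNReal.ofReal (Real.exp (-(s * n))) *
          ENNReal.ofReal (Real.exp (s * n)) := by
        rw [mul_assoc, ← ENNReal.ofReal_mul (Real.exp_pos _).le, ← Real.exp_add]
        simp
      calc c n = c n * ENNReal.ofReal (Real.exp (-(s * n))) *
          ENNReal.ofReal (Real.exp (s * n)) := h1
        _ ≤ _ := by
          gcongr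
          exact Finset.single_le_sum
            (f := fun r : ℕ => c r * ENNReal.ofReal (Real.exp (-(s * r))))
            (fun _ _ => zero_le) (Finset.mem_range.2 hn)
    · obtain ⟨d, rfl⟩ := Nat.exists_eq_add_of_le (not_lt.1 hn)
      refine (hsub k d).trans ((mul_le_mul' hs (ih d (by omega))).trans (le_of_eq ?_))
      rw [mul_left_comm, ← ENNReal.ofReal_mul (Real.exp_pos _).le, ← Real.exp_add]
      push_cast
      ring_nf

/-- Fekete's lemma in the form needed: the normalised logarithms of a sequence comparable to a
submultiplicative one converge to the upper limit of the latter (possibly `-∞`). -/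
lemma tendsto_of_submul {c c' : ℕ → ℝ≥0∞} (hc : ∀ n, c n ≠ ⊤)
    (hsub : ∀ m n, c (m + n) ≤ c m * c n) {K K' : ℝ≥0∞} (hK : K ≠ ⊤) (hK' : K' ≠ ⊤)
    (h1 : ∀ n, c' n ≤ K * c n) (h2 : ∀ n, c n ≤ K' * c' n) :
    Tendsto (fun m : ℕ => (((m : ℝ)⁻¹ : ℝ) : EReal) * (c' m).log) atTop
      (nhds (atTop.limsup fun m : ℕ => (((m : ℝ)⁻¹ : ℝ) : EReal) * (c m).log)) := by
  rw [tendsto_order]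
  constructor
  · intro b hb
    obtain ⟨s, hbs, hs⟩ := EReal.lt_iff_exists_real_btwn.1 hb
    obtain ⟨s', hs's, hs'⟩ := EReal.lt_iff_exists_real_btwn.1 hs
    obtain ⟨s'', hs''s, hs''⟩ := EReal.lt_iff_exists_real_btwn.1 hs'
    by_contra hcon
    have hfreq : ∃ᶠ m : ℕ in atTop, (((m : ℝ)⁻¹ : ℝ) : EReal) * (c' m).log ≤ b := by
      simpa [Filter.Frequently] using hcon
    obtain ⟨k, hk, hk1, hk2⟩ := (hfreq.and_eventually
      ((eventually_const_mul_exp_le hK' (EReal.coe_lt_coe_iff.1 hs's)).and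
        (eventually_gt_atTop 0))).exists
    have hk3 := (inv_mul_log_le_iff hk2 (c' k) s).1 (hk.trans hbs.le)
    have hk4 : c k ≤ ENNReal.ofReal (Real.exp (s' * k)) :=
      (h2 k).trans ((mul_le_mul_right hk3 K').trans hk1)
    obtain ⟨R, hR, hRb⟩ := submul_bound hc hsub hk2 hk4
    refine absurd hs'' (not_lt.2 ?_)
    refine Filter.limsup_le_of_le (h := ?_)
    filter_upwards [eventually_const_mul_exp_le hR (EReal.coe_lt_coe_iff.1 hs''s),
      eventually_gt_atTop 0] with m hm hm0
    exact (inv_mul_log_le_iff hm0 _ _).2 ((hRb m).trans hm)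
  · intro b hb
    obtain ⟨s, hs, hsb⟩ := EReal.lt_iff_exists_real_btwn.1 hb
    obtain ⟨s', hs's, hs'⟩ := EReal.lt_iff_exists_real_btwn.1 hsb
    obtain ⟨k, hk, hk0⟩ := ((Filter.eventually_lt_of_limsup_lt hs).and
      (eventually_gt_atTop 0)).exists
    obtain ⟨R, hR, hRb⟩ := submul_bound hc hsub hk0 ((inv_mul_log_le_iff hk0 _ _).1 hk.le)
    filter_upwards [eventually_const_mul_exp_le (ENNReal.mul_ne_top hK hR)
      (EReal.coe_lt_coe_iff.1 hs's), eventually_gt_atTop 0] with m hm hm0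
    refine lt_of_le_of_lt ((inv_mul_log_le_iff hm0 _ _).2 ((h1 m).trans ?_)) hs'
    refine (mul_le_mul_right (hRb m) K).trans ?_
    rwa [← mul_assoc]

end Analysis

/-! ### Dimensions in a Mayer–Vietoris sequence -/

section LinearAlgebra

variable {D E B' B D₁ E₁ B₁' B₁ P Q : Type*}
  [AddCommGroup D] [Module ℂ D] [AddCommGroup E] [Module ℂ E] [FiniteDimensional ℂ E]
  [AddCommGroup B'] [Module ℂ B'] [AddCommGroup B] [Module ℂ B] [FiniteDimensional ℂ B]
  [AddCommGroup D₁] [Module ℂ D₁] [AddCommGroup E₁] [Module ℂ E₁]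
  [AddCommGroup B₁'] [Module ℂ B₁'] [AddCommGroup B₁] [Module ℂ B₁]
  [AddCommGroup P] [Module ℂ P] [FiniteDimensional ℂ P]
  [AddCommGroup Q] [Module ℂ Q] [FiniteDimensional ℂ Q]

/-- The dimension of the third term of a long exact sequence. -/
lemma finrank_third (f : D →ₗ[ℂ] E) (g : E →ₗ[ℂ] P) (h : P →ₗ[ℂ] D₁) (f₁ : D₁ →ₗ[ℂ] E₁)
    (e₁ : LinearMap.range f = LinearMap.ker g) (e₂ : LinearMap.range g = LinearMap.ker h)
    (e₃ : LinearMap.range h = LinearMap.ker f₁) :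
    Module.finrank ℂ P + Module.finrank ℂ (LinearMap.range f) =
      Module.finrank ℂ E + Module.finrank ℂ (LinearMap.ker f₁) := by
  have h1 := g.finrank_range_add_finrank_ker
  have h2 := h.finrank_range_add_finrank_ker
  rw [e₁, ← e₃, ← h1, ← h2, e₂]
  omega

/-- Two long exact sequences whose first maps `f : D → E` and `j : B' → B` are opposite sides of
a square with a Mayer–Vietoris sequence `D → E ⊕ B' → B → D₁ → E₁ ⊕ B₁' → B₁` have third
terms of the same dimension. -/
lemma finrank_eq_of_mayerVietoris [FiniteDimensional ℂ D₁]
    (f : D →ₗ[ℂ] E) (g : E →ₗ[ℂ] P) (h : P →ₗ[ℂ] D₁) (f₁ : D₁ →ₗ[ℂ] E₁)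
    (e₁ : LinearMap.range f = LinearMap.ker g) (e₂ : LinearMap.range g = LinearMap.ker h)
    (e₃ : LinearMap.range h = LinearMap.ker f₁)
    (j : B' →ₗ[ℂ] B) (g' : B →ₗ[ℂ] Q) (h' : Q →ₗ[ℂ] B₁') (j₁ : B₁' →ₗ[ℂ] B₁)
    (e₁' : LinearMap.range j = LinearMap.ker g') (e₂' : LinearMap.range g' = LinearMap.ker h')
    (e₃' : LinearMap.range h' = LinearMap.ker j₁)
    (u : D →ₗ[ℂ] B') (v : E →ₗ[ℂ] B) (w : B →ₗ[ℂ] D₁) (u₁ : D₁ →ₗ[ℂ] B₁')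
    (c₁ : ∀ d, v (f d) + j (u d) = 0)
    (c₂ : ∀ e b, v e + j b = 0 → ∃ d, f d = e ∧ u d = b)
    (c₃ : ∀ b, w b = 0 ↔ ∃ e b', v e + j b' = b)
    (c₄ : ∀ d, (f₁ d = 0 ∧ u₁ d = 0) ↔ ∃ b, w b = d)
    (c₅ : ∀ b, j₁ b = 0 ↔ ∃ d, f₁ d = 0 ∧ u₁ d = b) :
    Module.finrank ℂ P = Module.finrank ℂ Q := by
  have hP := finrank_third f g h f₁ e₁ e₂ e₃
  have hQ := finrank_third j g' h' j₁ e₁' e₂' e₃'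
  let q := (LinearMap.range j).mkQ
  -- `E → coker j` has kernel `range f`, and its range is the kernel of `coker j → D₁`
  have hker : LinearMap.ker (q ∘ₗ v) = LinearMap.range f := by
    ext e
    simp only [LinearMap.mem_ker, LinearMap.comp_apply, q, Submodule.mkQ_apply,
      Submodule.Quotient.mk_eq_zero, LinearMap.mem_range]
    constructor
    · rintro ⟨b, hb⟩
      obtain ⟨d, hd, -⟩ := c₂ e (-b) (by simp [hb])
      exact ⟨d, hd⟩
    · rintro ⟨d, rfl⟩
      exact ⟨-u d, by rw [map_neg, eq_comm, ← sub_eq_zero, sub_neg_eq_add, c₁]⟩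
  have hwj : LinearMap.range j ≤ LinearMap.ker w := by
    rintro _ ⟨b, rfl⟩
    exact (c₃ _).2 ⟨0, b, by simp⟩
  let w' := (LinearMap.range j).liftQ w hwj
  have hw' : LinearMap.ker w' = LinearMap.range (q ∘ₗ v) := by
    ext x
    obtain ⟨b, rfl⟩ := (LinearMap.range j).mkQ_surjective x
    simp only [LinearMap.mem_ker, w', Submodule.mkQ_apply, Submodule.liftQ_apply, c₃,
      LinearMap.mem_range, LinearMap.comp_apply, q]
    constructor
    · rintro ⟨e, b', rfl⟩
      refine ⟨e, ?_⟩
      rw [Submodule.Quotient.eq]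
      exact ⟨-b', by simp⟩
    · rintro ⟨e, he⟩
      rw [Submodule.Quotient.eq] at he
      obtain ⟨b', hb'⟩ := he
      exact ⟨e, -b', by rw [map_neg, hb']; abel⟩
  have hrw : LinearMap.range w' = LinearMap.range w := Submodule.range_liftQ _ _ _
  have k1 := (q ∘ₗ v).finrank_range_add_finrank_ker
  have k2 := w'.finrank_range_add_finrank_ker
  have k3 := (LinearMap.range j).finrank_quotient_add_finrank
  -- `u₁ : ker f₁ → ker j₁` is onto with kernel `range w`
  let u' := u₁.domRestrict (LinearMap.ker f₁)
  have k4 := u'.finrank_range_add_finrank_ker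
  have hru : LinearMap.range u' = LinearMap.ker j₁ := by
    ext b
    simp only [LinearMap.mem_range, LinearMap.mem_ker, c₅]
    constructor
    · rintro ⟨⟨d, hd⟩, rfl⟩
      exact ⟨d, hd, rfl⟩
    · rintro ⟨d, hd, rfl⟩
      exact ⟨⟨d, hd⟩, rfl⟩
  have hku : (LinearMap.ker u').map (LinearMap.ker f₁).subtype = LinearMap.range w := by
    ext d
    simp only [Submodule.mem_map, LinearMap.mem_range, ← c₄]
    constructor
    · rintro ⟨⟨d, hd⟩, hd', rfl⟩
      exact ⟨hd, hd'⟩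
    · rintro ⟨h1, h2⟩
      exact ⟨⟨d, h1⟩, h2, rfl⟩
  have k5 : Module.finrank ℂ (LinearMap.ker u') = Module.finrank ℂ (LinearMap.range w) := by
    rw [← hku]
    exact (Submodule.equivMapOfInjective _ (Submodule.injective_subtype _) _).finrank_eq
  rw [hker] at k1
  rw [hw', hrw] at k2
  rw [hru, k5] at k4
  omega

end LinearAlgebra

/-! ### Ranks in the long exact Hom sequences -/

section HomDimension

variable {C : Type u} [Category.{v} C] [Preadditive C] [HasZeroObject C]
  [HasShift C ℤ] [∀ n : ℤ, (shiftFunctor C n).Additive] [Pretriangulated C] [Linear ℂ C]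

lemma IsFiniteType.finiteDimensional (hft : IsFiniteType C) (X Y : C) :
    FiniteDimensional ℂ (X ⟶ Y) := by
  have := (hft X Y).2 0
  exact Module.Finite.equiv
    (Linear.homCongr ℂ (Iso.refl X) ((shiftFunctorZero C ℤ).app Y))

/-- Finiteness of the total Hom dimension makes the contravariant long exact sequences vanish
eventually. -/
lemma IsFiniteType.eventually_subsingleton (hft : IsFiniteType C) (X M : C) :
    ∀ᶠ k : ℕ in atTop, Subsingleton (X⟦(k : ℤ)⟧ ⟶ M) := by
  have h1 : {k : ℕ | ¬ Subsingleton (X ⟶ M⟦(-(k : ℤ))⟧)}.Finite :=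
    (hft X M).1.preimage (f := fun k : ℕ => -(k : ℤ))
      (fun a _ b _ h => by simpa using h)
  rw [← Nat.cofinite_eq_atTop]
  refine h1.subset fun k hk hsub => hk ⟨fun f g => ?_⟩
  apply (shiftFunctor C (-(k : ℤ))).map_injective
  let e := (shiftFunctorCompIsoId C (k : ℤ) (-(k : ℤ)) (by simp)).app X
  rw [← cancel_epi e.inv]
  exact hsub.elim _ _

/-- The linear map `Hom(W, M) → Hom(X, M)`, `h ↦ f ≫ h ≫ p`. When `p` is idempotent, this has
the same range as precomposition with `f` on the summand `p Hom(-, M)`. -/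
def compMap {M X W : C} (p : M ⟶ M) (f : X ⟶ W) : (W ⟶ M) →ₗ[ℂ] (X ⟶ M) :=
  Linear.leftComp ℂ M f ∘ₗ Linear.rightComp ℂ W p

@[simp]
lemma compMap_apply {M X W : C} (p : M ⟶ M) (f : X ⟶ W) (h : W ⟶ M) :
    compMap p f h = f ≫ h ≫ p := rfl

/-- Exactness of `p Hom(-, M)` on a distinguished triangle, in terms of ranks. -/
lemma rank_add_rank (hft : IsFiniteType C) {M : C} {p : M ⟶ M} (hp : p ≫ p = p)
    (T : Triangle C) (hT : T ∈ distTriang C) :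
    Module.finrank ℂ (LinearMap.range (compMap p T.mor₁)) +
      Module.finrank ℂ (LinearMap.range (compMap p T.mor₂)) =
    Module.finrank ℂ (LinearMap.range (Linear.rightComp ℂ T.obj₂ p)) := by
  have := hft.finiteDimensional
  let S := LinearMap.range (Linear.rightComp ℂ T.obj₂ p)
  let L := (Linear.leftComp ℂ M T.mor₁).domRestrict S
  have h1 : LinearMap.range L = LinearMap.range (compMap p T.mor₁) := by
    rw [LinearMap.range_domRestrict, compMap, LinearMap.range_comp]
  have h2 : (LinearMap.ker L).map S.subtype = LinearMap.range (compMap p T.mor₂) := by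
    ext h
    simp only [Submodule.mem_map, LinearMap.mem_ker, LinearMap.mem_range]
    constructor
    · rintro ⟨⟨_, ⟨h, rfl⟩⟩, hh, rfl⟩
      obtain ⟨k, hk⟩ := Triangle.yoneda_exact₂ T hT (h ≫ p) hh
      refine ⟨k, ?_⟩
      change T.mor₂ ≫ k ≫ p = h ≫ p
      rw [← Category.assoc, ← hk, Category.assoc, hp]
    · rintro ⟨k, rfl⟩
      refine ⟨⟨T.mor₂ ≫ k ≫ p, ⟨T.mor₂ ≫ k, by simp [Linear.rightComp]⟩⟩, ?_, rfl⟩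
      change T.mor₁ ≫ T.mor₂ ≫ k ≫ p = 0
      rw [← Category.assoc, comp_distTriang_mor_zero₁₂ T hT, zero_comp]
  have h3 := L.finrank_range_add_finrank_ker
  rw [h1] at h3
  rw [← h2, ← h3]
  congr 1
  exact ((Submodule.equivMapOfInjective _ (Submodule.injective_subtype _) _).finrank_eq).symm

/-- The ranks in the long exact sequences of `p Hom(-, M)` and `q Hom(-, N)` are determined by
the dimensions of the terms, since the sequences vanish far enough along. -/
lemma rank_eq (hft : IsFiniteType C) {M N : C} {p : M ⟶ M} {q : N ⟶ N} (hp : p ≫ p = p)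
    (hq : q ≫ q = q)
    (hdim : ∀ Z : C, Module.finrank ℂ (LinearMap.range (Linear.rightComp ℂ Z p)) =
      Module.finrank ℂ (LinearMap.range (Linear.rightComp ℂ Z q)))
    (T : Triangle C) (hT : T ∈ distTriang C) :
    Module.finrank ℂ (LinearMap.range (compMap p T.mor₁)) =
      Module.finrank ℂ (LinearMap.range (compMap q T.mor₁)) := by
  have := hft.finiteDimensional
  obtain ⟨k, hk, hk'⟩ := ((hft.eventually_subsingleton T.obj₁ M).and
    (hft.eventually_subsingleton T.obj₁ N)).exists
  induction k generalizing T with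
  | zero =>
    -- here `Hom(T.obj₁, M)` and `Hom(T.obj₁, N)` both vanish
    have key : ∀ Y : C, Subsingleton (T.obj₁⟦((0 : ℕ) : ℤ)⟧ ⟶ Y) →
        Subsingleton (T.obj₁ ⟶ Y) := fun Y h => ⟨fun f g => by
      rw [← cancel_epi ((shiftFunctorZero' C ((0 : ℕ) : ℤ) (by simp)).hom.app T.obj₁)]
      exact h.elim _ _⟩
    have := key M hk
    have := key N hk'
    rw [Module.finrank_zero_of_subsingleton, Module.finrank_zero_of_subsingleton]
  | succ k ih =>
    -- three rotations shift `T` by one, and each changes the rank by a known dimension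
    have hT1 := rot_of_distTriang _ hT
    have hT2 := rot_of_distTriang _ hT1
    have hT3 := rot_of_distTriang _ hT2
    have key : ∀ Y : C, Subsingleton (T.obj₁⟦((k + 1 : ℕ) : ℤ)⟧ ⟶ Y) →
        Subsingleton ((T.obj₁⟦(1 : ℤ)⟧)⟦(k : ℤ)⟧ ⟶ Y) := fun Y h => ⟨fun f g => by
      rw [← cancel_epi ((shiftFunctorAdd' C (1 : ℤ) (k : ℤ) ((k + 1 : ℕ) : ℤ)
        (by push_cast; ring)).hom.app T.obj₁)]
      exact h.elim _ _⟩
    have e3 := ih T.rotate.rotate.rotate hT3 (key M hk) (key N hk')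
    have p0 := rank_add_rank hft hp T hT
    have q0 := rank_add_rank hft hq T hT
    have p1 := rank_add_rank hft hp _ hT1
    have q1 := rank_add_rank hft hq _ hT1
    have p2 := rank_add_rank hft hp _ hT2
    have q2 := rank_add_rank hft hq _ hT2
    have d0 := hdim T.obj₂
    have d1 := hdim T.rotate.obj₂
    have d2 := hdim T.rotate.rotate.obj₂
    change Module.finrank ℂ (LinearMap.range (compMap p T.mor₂)) + _ = _ at p1
    change Module.finrank ℂ (LinearMap.range (compMap q T.mor₂)) + _ = _ at q1
    change Module.finrank ℂ (LinearMap.range (compMap p T.rotate.mor₂)) +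
      Module.finrank ℂ (LinearMap.range (compMap p T.rotate.rotate.rotate.mor₁)) = _ at p2
    change Module.finrank ℂ (LinearMap.range (compMap q T.rotate.mor₂)) +
      Module.finrank ℂ (LinearMap.range (compMap q T.rotate.rotate.rotate.mor₁)) = _ at q2
    omega

/-- If `p Hom(-, M)` and `q Hom(-, N)` have the same dimensions, then `p` lies in the ideal of
endomorphisms of `M` factoring through finite sums of copies of the image of `q`. -/
lemma idempotent_mem_span (hft : IsFiniteType C) {M N : C} {p : M ⟶ M} {q : N ⟶ N}
    (hp : p ≫ p = p) (hq : q ≫ q = q)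
    (hdim : ∀ Z : C, Module.finrank ℂ (LinearMap.range (Linear.rightComp ℂ Z p)) =
      Module.finrank ℂ (LinearMap.range (Linear.rightComp ℂ Z q))) :
    ∃ (r : ℕ) (b : Fin r → (M ⟶ N)) (h : Fin r → (N ⟶ M)),
      p = ∑ i, (p ≫ b i ≫ q) ≫ (q ≫ h i ≫ p) := by
  have := hft.finiteDimensional
  let b := Module.finBasis ℂ (M ⟶ N)
  let W : C := (⨁ fun _ : Fin (Module.finrank ℂ (M ⟶ N)) => N) ⊞ M
  -- the added component `𝟙 - p` makes `f` a left approximation on all of `Hom(M, N)`,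
  -- although `p` need not split
  let f : M ⟶ W := biprod.lift (biproduct.lift fun i => p ≫ b i ≫ q) (𝟙 M - p)
  obtain ⟨K, g, h, hT⟩ := distinguished_cocone_triangle f
  have hr := rank_eq hft hp hq hdim _ hT
  change Module.finrank ℂ (LinearMap.range (compMap p f)) =
    Module.finrank ℂ (LinearMap.range (compMap q f)) at hr
  have hle : ∀ {Y : C} (s : Y ⟶ Y), LinearMap.range (compMap s f) ≤
      LinearMap.range (Linear.rightComp ℂ M s) := by
    rintro Y s _ ⟨k, rfl⟩
    exact ⟨f ≫ k, by simp [Linear.rightComp]⟩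
  have hsurj : LinearMap.range (Linear.rightComp ℂ M q) ≤ LinearMap.range (compMap q f) := by
    rintro _ ⟨k, rfl⟩
    refine ⟨biprod.desc (biproduct.desc fun i => b.repr k i • 𝟙 N) k, ?_⟩
    have h1 : ∑ i, b.repr k i • b i = k := b.sum_repr k
    have h2 : (∑ i, b.repr k i • (p ≫ b i ≫ q ≫ q)) = p ≫ k ≫ q := by
      calc _ = p ≫ (∑ i, b.repr k i • b i) ≫ q := by
            rw [Preadditive.sum_comp, Preadditive.comp_sum]
            exact Finset.sum_congr rfl fun i _ => by simp [hq]
        _ = _ := by rw [h1]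
    simp only [compMap_apply, f, Linear.rightComp, biprod.lift_desc_assoc, biproduct.lift_desc_assoc,
      Preadditive.add_comp, Preadditive.sum_comp, Preadditive.sub_comp, Linear.smul_comp,
      Linear.comp_smul, Category.assoc, Category.id_comp, h2, LinearMap.coe_mk, AddHom.coe_mk]
    abel
  have hrq := le_antisymm (hle q) hsurj
  have hrp : LinearMap.range (compMap p f) = LinearMap.range (Linear.rightComp ℂ M p) := by
    apply Submodule.eq_of_le_of_finrank_eq (hle p)
    rw [hr, hrq, hdim]
  obtain ⟨k, hk⟩ : p ∈ LinearMap.range (compMap p f) := by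
    rw [hrp]
    exact ⟨𝟙 M, by simp [Linear.rightComp]⟩
  refine ⟨_, b, fun i => biproduct.ι (fun _ => N) i ≫ biprod.inl ≫ k, ?_⟩
  have hf : f = (∑ i, (p ≫ b i ≫ q) ≫ biproduct.ι (fun _ : Fin (Module.finrank ℂ (M ⟶ N)) => N) i) ≫ biprod.inl +
      (𝟙 M - p) ≫ biprod.inr := by
    have : (∑ i, (p ≫ b i ≫ q) ≫ biproduct.ι (fun _ : Fin (Module.finrank ℂ (M ⟶ N)) => N) i) =
        biproduct.lift fun i => p ≫ b i ≫ q := by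
      rw [biproduct.lift_eq]
    rw [this, ← biprod.lift_eq]
  have hk' : p ≫ f ≫ k ≫ p = p := by
    change p ≫ compMap p f k = p
    rw [hk, hp]
  have hp0 : p ≫ (𝟙 M - p) = 0 := by simp [Preadditive.comp_sub, hp]
  conv_lhs => rw [← hk', hf]
  rw [Preadditive.add_comp, Preadditive.comp_add, Category.assoc (𝟙 M - p), reassoc_of% hp0,
    zero_comp, add_zero]
  simp [Preadditive.sum_comp, Preadditive.comp_sum, reassoc_of% hp, reassoc_of% hq]

end HomDimension

/-! ### Idempotents and partial isomorphisms -/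

section Bongartz

/-- A non-nilpotent element `x` of a finite-dimensional algebra divides a nonzero idempotent:
writing the minimal polynomial of `x` as `X ^ n * g` with `g` coprime to `X`, this is the
projection onto the invertible part of `x` given by a Bézout identity. -/
lemma exists_idempotent_of_not_isNilpotent {R : Type*} [Ring R] [Algebra ℂ R]
    [FiniteDimensional ℂ R] (x : R) (hx : ¬ IsNilpotent x) :
    ∃ y : R, Commute x y ∧ (x * y) * (x * y) = x * y ∧ x * y ≠ 0 := by
  obtain ⟨n, g, hg, hnd⟩ : ∃ n g, minpoly ℂ x = Polynomial.X ^ n * g ∧ ¬ Polynomial.X ∣ g := by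
    obtain ⟨g, hg, hnd⟩ := Polynomial.exists_eq_pow_rootMultiplicity_mul_and_not_dvd
      (minpoly ℂ x) (minpoly.ne_zero (Algebra.IsIntegral.isIntegral x)) 0
    rw [Polynomial.C_0, sub_zero] at hg hnd
    exact ⟨_, g, hg, hnd⟩
  obtain ⟨u, w, huw⟩ := (Polynomial.irreducible_X.coprime_iff_not_dvd.2 hnd).pow_left (m := n + 1)
  obtain ⟨φ, hX, hmin⟩ : ∃ φ : Polynomial ℂ →ₐ[ℂ] R, φ Polynomial.X = x ∧
      φ (Polynomial.X ^ n * g) = 0 :=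
    ⟨Polynomial.aeval x, Polynomial.aeval_X x, by rw [← hg]; exact minpoly.aeval ℂ x⟩
  have hcomm : ∀ s t, φ s * φ t = φ t * φ s := fun s t => by rw [← map_mul, mul_comm, map_mul]
  have he : x * φ (u * Polynomial.X ^ n) = φ (u * Polynomial.X ^ (n + 1)) := by
    have : (u * Polynomial.X ^ (n + 1) : Polynomial ℂ) =
      Polynomial.X * (u * Polynomial.X ^ n) := by ring
    rw [this, map_mul φ Polynomial.X, hX]
  have hxn : φ (Polynomial.X ^ n) = φ (u * Polynomial.X ^ (n + 1)) * φ (Polynomial.X ^ n) := by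
    rw [← map_mul]
    have : (Polynomial.X ^ n : Polynomial ℂ) =
        u * Polynomial.X ^ (n + 1) * Polynomial.X ^ n + w * (Polynomial.X ^ n * g) := by
      linear_combination (-(Polynomial.X ^ n : Polynomial ℂ)) * huw
    conv_lhs => rw [this, map_add, map_mul φ w, hmin, mul_zero, add_zero]
  refine ⟨φ (u * Polynomial.X ^ n), ?_, ?_, ?_⟩
  · rw [Commute, SemiconjBy]
    rw [← hX, hcomm]
  · rw [he]
    have : (u * Polynomial.X ^ (n + 1) : Polynomial ℂ) =
      Polynomial.X ^ n * (u * Polynomial.X) := by ring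
    conv_rhs => rw [this, map_mul, hxn, mul_assoc, ← map_mul, ← this]
  · rw [he]
    intro h0
    rw [h0, zero_mul, map_pow, hX] at hxn
    exact hx ⟨n, hxn⟩

variable {C : Type u} [Category.{v} C] [Preadditive C] [Linear ℂ C]

lemma leftComp_pow {M : C} (x : M ⟶ M) (n : ℕ) (h : M ⟶ M) :
    ((Linear.leftComp ℂ M x : Module.End ℂ (M ⟶ M)) ^ n) h = (End.of x ^ n : End M) ≫ h := by
  induction n generalizing h with
  | zero => simp [End.one_def]
  | succ n ih =>
    rw [pow_succ, Module.End.mul_apply, ih, pow_succ', End.mul_def, Category.assoc]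
    rfl

/-- An idempotent which is a sum of nilpotent endomorphisms vanishes, by comparing traces. -/
lemma idempotent_eq_zero_of_sum_nilpotent {M : C} [FiniteDimensional ℂ (M ⟶ M)] {p : M ⟶ M}
    (hp : p ≫ p = p) {r : ℕ} (x : Fin r → (M ⟶ M)) (hx : ∀ i, IsNilpotent (End.of (x i)))
    (hsum : p = ∑ i, x i) : p = 0 := by
  have h1 : (Linear.leftComp ℂ M p : (M ⟶ M) →ₗ[ℂ] (M ⟶ M)) =
      ∑ i, Linear.leftComp ℂ M (x i) := by
    ext h
    rw [LinearMap.sum_apply]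
    change p ≫ h = ∑ i, x i ≫ h
    rw [← Preadditive.sum_comp, ← hsum]
  have h2 : LinearMap.trace ℂ (M ⟶ M) (Linear.leftComp ℂ M p) = 0 := by
    rw [h1, map_sum]
    refine Finset.sum_eq_zero fun i _ => ?_
    obtain ⟨n, hn⟩ := hx i
    refine (LinearMap.isNilpotent_trace_of_isNilpotent ⟨n, ?_⟩).eq_zero
    ext h
    rw [leftComp_pow, hn]
    exact zero_comp
  have h3 : IsIdempotentElem (Linear.leftComp ℂ M p : Module.End ℂ (M ⟶ M)) := by
    ext h
    change p ≫ p ≫ h = p ≫ h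
    rw [← Category.assoc, hp]
  have h4 := (LinearMap.IsIdempotentElem.trace_eq_zero_iff h3).1 h2
  have h5 := LinearMap.congr_fun h4 (𝟙 M)
  simpa [Linear.leftComp] using h5

lemma finrank_range_rightComp_add [∀ X Y : C, FiniteDimensional ℂ (X ⟶ Y)] {M : C} {e : M ⟶ M}
    (he : e ≫ e = e) (Z : C) :
    Module.finrank ℂ (LinearMap.range (Linear.rightComp ℂ Z e)) +
      Module.finrank ℂ (LinearMap.range (Linear.rightComp ℂ Z (𝟙 M - e))) =
      Module.finrank ℂ (Z ⟶ M) := by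
  rw [← (Linear.rightComp ℂ Z e).finrank_range_add_finrank_ker]
  suffices hr : LinearMap.range (Linear.rightComp ℂ Z (𝟙 M - e)) =
      LinearMap.ker (Linear.rightComp ℂ Z e) by rw [hr]
  ext h
  constructor
  · rintro ⟨k, rfl⟩
    change (k ≫ (𝟙 M - e)) ≫ e = 0
    simp [Preadditive.sub_comp, Preadditive.comp_sub, he]
  · intro hh
    change h ≫ e = 0 at hh
    exact ⟨h, by change h ≫ (𝟙 M - e) = h; simp [Preadditive.comp_sub, hh]⟩

/-- With the symmetric statement, the images of the idempotents `a ≫ b` and `b ≫ a` have the same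
dimension on every Hom space. -/
lemma finrank_range_rightComp_comp_le [∀ X Y : C, FiniteDimensional ℂ (X ⟶ Y)] {M N : C}
    {a : M ⟶ N} {b : N ⟶ M} (h : a ≫ b ≫ a = a) (Z : C) :
    Module.finrank ℂ (LinearMap.range (Linear.rightComp ℂ Z (a ≫ b))) ≤
      Module.finrank ℂ (LinearMap.range (Linear.rightComp ℂ Z (b ≫ a))) := by
  refine le_trans (Submodule.finrank_mono ?_)
    (Submodule.finrank_map_le (Linear.rightComp ℂ Z b) _)
  rintro _ ⟨k, rfl⟩
  refine ⟨k ≫ a, ⟨k ≫ a, ?_⟩, ?_⟩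
  · change (k ≫ a) ≫ b ≫ a = k ≫ a
    rw [Category.assoc, h]
  · change (k ≫ a) ≫ b = k ≫ a ≫ b
    rw [Category.assoc]

/-- Enlarging a pair of mutually inverse partial isomorphisms `a`, `b` between `M` and `N` by
means of a non-nilpotent endomorphism `f ≫ g` of the complement of `M` factoring through the
complement of `N`. The size of the pair is measured by the rank of `a ≫ b` on `Hom(M, M)`. -/
lemma enlarge_pair [∀ X Y : C, FiniteDimensional ℂ (X ⟶ Y)] {M N : C} {a : M ⟶ N} {b : N ⟶ M}
    (hab : a ≫ b ≫ a = a) (hba : b ≫ a ≫ b = b) {f : M ⟶ N} {g : N ⟶ M}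
    (hbf : b ≫ f = 0) (hfb : f ≫ b = 0) (hag : a ≫ g = 0) (hga : g ≫ a = 0)
    (hx : ¬ IsNilpotent (End.of (f ≫ g))) :
    ∃ (a' : M ⟶ N) (b' : N ⟶ M), a' ≫ b' ≫ a' = a' ∧ b' ≫ a' ≫ b' = b' ∧
      Module.finrank ℂ (LinearMap.range (Linear.leftComp ℂ M (a ≫ b))) <
        Module.finrank ℂ (LinearMap.range (Linear.leftComp ℂ M (a' ≫ b'))) := by
  have : FiniteDimensional ℂ (End M) := inferInstanceAs (FiniteDimensional ℂ (M ⟶ M))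
  obtain ⟨y, hxy, hid, hne⟩ := exists_idempotent_of_not_isNilpotent (End.of (f ≫ g)) hx
  obtain ⟨e, he⟩ : ∃ e : M ⟶ M, e = y ≫ f ≫ g := ⟨_, rfl⟩
  have he' : e = f ≫ g ≫ y := by
    rw [he]
    have := hxy.eq
    rw [End.mul_def, End.mul_def] at this
    simpa using this
  have hee : e ≫ e = e := by rw [he]; exact hid
  have hne : e ≠ 0 := by rw [he]; exact hne
  have hea : e ≫ a = 0 := by rw [he]; simp [hga]
  have hbe : b ≫ e = 0 := by rw [he', reassoc_of% hbf, zero_comp]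
  have hfbe : f ≫ g ≫ y = e := he'.symm
  let a₁ : M ⟶ N := e ≫ f
  let b₁ : N ⟶ M := g ≫ y ≫ e
  have h1 : a₁ ≫ b₁ = e := by
    simp only [a₁, b₁, Category.assoc]
    rw [reassoc_of% hfbe, hee, hee]
  have h2 : a ≫ b₁ = 0 := by simp only [b₁]; rw [reassoc_of% hag, zero_comp]
  have h3 : b₁ ≫ a = 0 := by simp only [b₁, Category.assoc]; rw [hea]; simp
  have h4 : a₁ ≫ b = 0 := by simp only [a₁, Category.assoc]; rw [hfb]; simp
  have h5 : b ≫ a₁ = 0 := by simp only [a₁]; rw [reassoc_of% hbe, zero_comp]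
  have h6 : e ≫ a₁ = a₁ := by simp only [a₁]; rw [reassoc_of% hee]
  have h7 : b₁ ≫ e = b₁ := by simp only [b₁, Category.assoc]; rw [hee]
  have h8 : (a + a₁) ≫ (b + b₁) = a ≫ b + e := by
    simp [Preadditive.add_comp, Preadditive.comp_add, h1, h2, h4]
  refine ⟨a + a₁, b + b₁, ?_, ?_, ?_⟩
  · rw [← Category.assoc, h8]
    simp [Preadditive.add_comp, Preadditive.comp_add, hab, h5, hea, h6]
  · rw [h8]
    simp [Preadditive.add_comp, Preadditive.comp_add, hba, hbe, h7, reassoc_of% h3]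
  · rw [h8]
    apply Submodule.finrank_lt_finrank_of_lt
    refine lt_of_le_of_ne ?_ ?_
    · rintro _ ⟨h, rfl⟩
      refine ⟨a ≫ b ≫ h, ?_⟩
      change (a ≫ b + e) ≫ a ≫ b ≫ h = (a ≫ b) ≫ h
      rw [Preadditive.add_comp, reassoc_of% hea, zero_comp, add_zero, Category.assoc,
        Category.assoc, reassoc_of% hba]
    · intro heq
      have hmem : e ∈ LinearMap.range (Linear.leftComp ℂ M (a ≫ b)) := by
        rw [heq]
        refine ⟨e, ?_⟩
        change (a ≫ b + e) ≫ e = e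
        rw [Preadditive.add_comp, Category.assoc, hbe, comp_zero, zero_add, hee]
      obtain ⟨h, hh⟩ := hmem
      change (a ≫ b) ≫ h = e at hh
      apply hne
      calc e = e ≫ e := hee.symm
        _ = e ≫ (a ≫ b) ≫ h := by rw [hh]
        _ = 0 := by rw [Category.assoc, reassoc_of% hea, zero_comp]

end Bongartz

/-! ### Objects are determined by the dimensions of their Hom spaces -/

section Iso

variable {C : Type u} [Category.{v} C] [Preadditive C] [HasZeroObject C]
  [HasShift C ℤ] [∀ n : ℤ, (shiftFunctor C n).Additive] [Pretriangulated C] [Linear ℂ C]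

/-- In a category of finite type, an object is determined up to isomorphism by the dimensions of
its Hom spaces (the analogue of a theorem of Auslander and Bongartz). Take mutually inverse
partial isomorphisms `a`, `b` between `M` and `N` of maximal rank. By maximality, every
endomorphism of the complement of `M` through the complement of `N` is nilpotent, while the
identity of the complement of `M` is a sum of such, hence vanishes. -/
theorem nonempty_iso_of_finrank_eq (hft : IsFiniteType C) {M N : C}
    (h : ∀ Z : C, Module.finrank ℂ (Z ⟶ M) = Module.finrank ℂ (Z ⟶ N)) : Nonempty (M ≅ N) := by
  have := hft.finiteDimensional
  let S : Set ℕ := {n | ∃ (a : M ⟶ N) (b : N ⟶ M), a ≫ b ≫ a = a ∧ b ≫ a ≫ b = b ∧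
    Module.finrank ℂ (LinearMap.range (Linear.leftComp ℂ M (a ≫ b))) = n}
  have hbdd : BddAbove S := ⟨Module.finrank ℂ (M ⟶ M), by
    rintro _ ⟨a, b, -, -, rfl⟩
    exact Submodule.finrank_le _⟩
  obtain ⟨a, b, hab, hba, hmax⟩ := Nat.sSup_mem (s := S) ⟨_, 0, 0, by simp, by simp, rfl⟩ hbdd
  have hp0 : (a ≫ b) ≫ (a ≫ b) = a ≫ b := by simp [hba]
  have hq0 : (b ≫ a) ≫ (b ≫ a) = b ≫ a := by simp [hab]
  obtain ⟨p, hpdef⟩ : ∃ p, p = 𝟙 M - a ≫ b := ⟨_, rfl⟩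
  obtain ⟨q, hqdef⟩ : ∃ q, q = 𝟙 N - b ≫ a := ⟨_, rfl⟩
  have hp : p ≫ p = p := by
    simp only [hpdef, Preadditive.sub_comp, Preadditive.comp_sub, hp0, Category.id_comp,
      Category.comp_id]
    abel
  have hq : q ≫ q = q := by
    simp only [hqdef, Preadditive.sub_comp, Preadditive.comp_sub, hq0, Category.id_comp,
      Category.comp_id]
    abel
  have hpa : p ≫ a = 0 := by simp [hpdef, Preadditive.sub_comp, hab]
  have hbp : b ≫ p = 0 := by simp [hpdef, Preadditive.comp_sub, hba]
  have hqb : q ≫ b = 0 := by simp [hqdef, Preadditive.sub_comp, hba]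
  have haq : a ≫ q = 0 := by simp [hqdef, Preadditive.comp_sub, hab]
  have hdim : ∀ Z : C, Module.finrank ℂ (LinearMap.range (Linear.rightComp ℂ Z p)) =
      Module.finrank ℂ (LinearMap.range (Linear.rightComp ℂ Z q)) := by
    intro Z
    have h1 := finrank_range_rightComp_add hp0 Z
    have h2 := finrank_range_rightComp_add hq0 Z
    have h3 := finrank_range_rightComp_comp_le hab Z
    have h4 := finrank_range_rightComp_comp_le hba Z
    have h5 := h Z
    rw [← hpdef] at h1
    rw [← hqdef] at h2
    omega
  obtain ⟨r, β, η, hsum⟩ := idempotent_mem_span hft hp hq hdim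
  have hpz : p = 0 := by
    refine idempotent_eq_zero_of_sum_nilpotent hp _ (fun i => ?_) hsum
    by_contra hnil
    obtain ⟨a', b', h1, h2, h3⟩ := enlarge_pair hab hba (f := p ≫ β i ≫ q) (g := q ≫ η i ≫ p)
      (by rw [reassoc_of% hbp, zero_comp]) (by simp [hqb]) (by rw [reassoc_of% haq, zero_comp])
      (by simp [hpa]) hnil
    rw [hmax] at h3
    exact absurd (le_csSup hbdd ⟨a', b', h1, h2, rfl⟩) (not_le.2 h3)
  have hqz : q = 0 := by
    have h1 := hdim N
    have h2 : LinearMap.range (Linear.rightComp ℂ N p) = ⊥ := by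
      rw [eq_bot_iff]
      rintro _ ⟨k, rfl⟩
      change k ≫ p = 0
      rw [hpz, comp_zero]
    rw [h2, finrank_bot] at h1
    have h3 := Submodule.finrank_eq_zero.1 h1.symm
    have h4 : q ∈ LinearMap.range (Linear.rightComp ℂ N q) := ⟨𝟙 N, Category.id_comp q⟩
    rw [h3] at h4
    exact h4
  exact ⟨⟨a, b, (sub_eq_zero.1 (hpdef.symm.trans hpz)).symm,
    (sub_eq_zero.1 (hqdef.symm.trans hqz)).symm⟩⟩

end Iso

/-! ### A substitute for the octahedral axiom -/

section Octahedral

variable {C : Type u} [Category.{v} C] [Preadditive C] [HasZeroObject C]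
  [HasShift C ℤ] [∀ n : ℤ, (shiftFunctor C n).Additive] [Pretriangulated C]

/-- Exactness of `Hom(Y, -)` at the shift of the middle term. -/
lemma coyoneda_exact_shift (T : Triangle C) (hT : T ∈ distTriang C) {Y : C}
    (f : Y ⟶ T.obj₂⟦(1 : ℤ)⟧) (hf : f ≫ T.mor₂⟦(1 : ℤ)⟧' = 0) :
    ∃ g : Y ⟶ T.obj₁⟦(1 : ℤ)⟧, f = g ≫ T.mor₁⟦(1 : ℤ)⟧' := by
  obtain ⟨g, hg⟩ := Triangle.coyoneda_exact₃ _
    (rot_of_distTriang _ (rot_of_distTriang _ hT)) f (by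
      change f ≫ (-T.mor₂⟦(1 : ℤ)⟧') = 0
      rw [Preadditive.comp_neg, hf, neg_zero])
  obtain ⟨g, rfl⟩ : ∃ g' : Y ⟶ T.obj₁⟦(1 : ℤ)⟧, g' = g := ⟨g, rfl⟩
  exact ⟨-g, hg.trans ((Preadditive.comp_neg g _).trans (Preadditive.neg_comp g _).symm)⟩

lemma mk_distinguished_of_iso {A E B A' E' B' : C} {f : A ⟶ E} {g : E ⟶ B} {h : B ⟶ A⟦(1 : ℤ)⟧}
    {f' : A' ⟶ E'} {g' : E' ⟶ B'} {h' : B' ⟶ A'⟦(1 : ℤ)⟧} (hT : Triangle.mk f g h ∈ distTriang C)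
    (a : A' ≅ A) (e : E' ≅ E) (b : B' ≅ B) (c₁ : f' ≫ e.hom = a.hom ≫ f)
    (c₂ : g' ≫ b.hom = e.hom ≫ g) (c₃ : h' ≫ a.hom⟦(1 : ℤ)⟧' = b.hom ≫ h) :
    Triangle.mk f' g' h' ∈ distTriang C :=
  isomorphic_distinguished _ hT _ (Triangle.isoMk _ _ a e b c₁ c₂ c₃)

/-- `E` is an extension of `B` by `A`: there is a distinguished triangle `A ⟶ E ⟶ B ⟶ A⟦1⟧`. -/
def IsExt (A E B : C) : Prop :=
  ∃ (f : A ⟶ E) (g : E ⟶ B) (h : B ⟶ A⟦(1 : ℤ)⟧), Triangle.mk f g h ∈ distTriang C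

lemma IsExt.of_iso {A E B A' E' B' : C} (h : IsExt A E B) (a : A ≅ A') (e : E ≅ E') (b : B ≅ B') :
    IsExt A' E' B' := by
  obtain ⟨f, g, h, hT⟩ := h
  refine ⟨a.inv ≫ f ≫ e.hom, e.inv ≫ g ≫ b.hom, b.inv ≫ h ≫ a.hom⟦(1 : ℤ)⟧',
    mk_distinguished_of_iso hT a.symm e.symm b.symm ?_ ?_ ?_⟩
  · simp
  · simp
  · simp [← Functor.map_comp]

lemma IsExt.of_distinguished {T : Triangle C} (hT : T ∈ distTriang C) :
    IsExt T.obj₁ T.obj₂ T.obj₃ := ⟨_, _, _, hT⟩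

variable [Linear ℂ C]

lemma range_rightComp_eq_ker {X Y Z W : C} (f : X ⟶ Y) (g : Y ⟶ Z) (h0 : f ≫ g = 0)
    (hex : ∀ k : W ⟶ Y, k ≫ g = 0 → ∃ l : W ⟶ X, k = l ≫ f) :
    LinearMap.range (Linear.rightComp ℂ W f) = LinearMap.ker (Linear.rightComp ℂ W g) := by
  ext k
  constructor
  · rintro ⟨l, rfl⟩
    change (l ≫ f) ≫ g = 0
    rw [Category.assoc, h0, comp_zero]
  · intro hk
    obtain ⟨l, hl⟩ := hex k hk
    exact ⟨l, hl.symm⟩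

/-- In a homotopy cartesian square, parallel sides have isomorphic cones. Without the octahedral
axiom, this is obtained by comparing the dimensions of Hom spaces. -/
lemma nonempty_iso_cone (hft : IsFiniteType C) {D E B' B P Q : C}
    {f : D ⟶ E} {u : D ⟶ B'} {v : E ⟶ B} {j : B' ⟶ B} {w : B ⟶ D⟦(1 : ℤ)⟧}
    (hT : Triangle.mk (biprod.lift f u) (biprod.desc v j) w ∈ distTriang C)
    {g : E ⟶ P} {h : P ⟶ D⟦(1 : ℤ)⟧} (hP : Triangle.mk f g h ∈ distTriang C)
    {g' : B ⟶ Q} {h' : Q ⟶ B'⟦(1 : ℤ)⟧} (hQ : Triangle.mk j g' h' ∈ distTriang C) :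
    Nonempty (P ≅ Q) := by
  have := hft.finiteDimensional
  have h12 : biprod.lift f u ≫ biprod.desc v j = 0 := comp_distTriang_mor_zero₁₂ _ hT
  have h23 : biprod.desc v j ≫ w = 0 := comp_distTriang_mor_zero₂₃ _ hT
  have h31 : w ≫ (biprod.lift f u)⟦(1 : ℤ)⟧' = 0 := comp_distTriang_mor_zero₃₁ _ hT
  have hsq : f ≫ v + u ≫ j = 0 := by simpa using h12
  have hvw : v ≫ w = 0 := by simpa using biprod.inl ≫= h23
  have hjw : j ≫ w = 0 := by simpa using biprod.inr ≫= h23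
  have hf1 : (biprod.lift f u)⟦(1 : ℤ)⟧' ≫ (biprod.fst : E ⊞ B' ⟶ E)⟦(1 : ℤ)⟧' = f⟦(1 : ℤ)⟧' := by
    rw [← Functor.map_comp, biprod.lift_fst]
  have hu1 : (biprod.lift f u)⟦(1 : ℤ)⟧' ≫ (biprod.snd : E ⊞ B' ⟶ B')⟦(1 : ℤ)⟧' = u⟦(1 : ℤ)⟧' := by
    rw [← Functor.map_comp, biprod.lift_snd]
  have hl1 : (biprod.lift f u)⟦(1 : ℤ)⟧' =
      f⟦(1 : ℤ)⟧' ≫ (biprod.inl : E ⟶ E ⊞ B')⟦(1 : ℤ)⟧' +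
        u⟦(1 : ℤ)⟧' ≫ (biprod.inr : B' ⟶ E ⊞ B')⟦(1 : ℤ)⟧' := by
    rw [← Functor.map_comp, ← Functor.map_comp, ← Functor.map_add, biprod.lift_eq]
  have hsq1 : f⟦(1 : ℤ)⟧' ≫ v⟦(1 : ℤ)⟧' + u⟦(1 : ℤ)⟧' ≫ j⟦(1 : ℤ)⟧' = 0 := by
    rw [← Functor.map_comp, ← Functor.map_comp, ← Functor.map_add, hsq, Functor.map_zero]
  refine nonempty_iso_of_finrank_eq hft fun Y => ?_
  refine finrank_eq_of_mayerVietoris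
    (Linear.rightComp ℂ Y f) (Linear.rightComp ℂ Y g) (Linear.rightComp ℂ Y h)
    (Linear.rightComp ℂ Y (f⟦(1 : ℤ)⟧'))
    (range_rightComp_eq_ker _ _ (comp_distTriang_mor_zero₁₂ _ hP)
      (Triangle.coyoneda_exact₂ _ hP))
    (range_rightComp_eq_ker _ _ (comp_distTriang_mor_zero₂₃ _ hP)
      (Triangle.coyoneda_exact₃ _ hP))
    (range_rightComp_eq_ker _ _ (comp_distTriang_mor_zero₃₁ _ hP)
      (Triangle.coyoneda_exact₁ _ hP))
    (Linear.rightComp ℂ Y j) (Linear.rightComp ℂ Y g') (Linear.rightComp ℂ Y h')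
    (Linear.rightComp ℂ Y (j⟦(1 : ℤ)⟧'))
    (range_rightComp_eq_ker _ _ (comp_distTriang_mor_zero₁₂ _ hQ)
      (Triangle.coyoneda_exact₂ _ hQ))
    (range_rightComp_eq_ker _ _ (comp_distTriang_mor_zero₂₃ _ hQ)
      (Triangle.coyoneda_exact₃ _ hQ))
    (range_rightComp_eq_ker _ _ (comp_distTriang_mor_zero₃₁ _ hQ)
      (Triangle.coyoneda_exact₁ _ hQ))
    (Linear.rightComp ℂ Y u) (Linear.rightComp ℂ Y v) (Linear.rightComp ℂ Y w)
    (Linear.rightComp ℂ Y (u⟦(1 : ℤ)⟧')) ?_ ?_ ?_ ?_ ?_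
  · intro d
    change (d ≫ f) ≫ v + (d ≫ u) ≫ j = 0
    rw [Category.assoc, Category.assoc, ← Preadditive.comp_add, hsq, comp_zero]
  · intro e b (heb : e ≫ v + b ≫ j = 0)
    obtain ⟨d, hd⟩ := Triangle.coyoneda_exact₂ _ hT (biprod.lift e b)
      ((biprod.lift_desc (f := e) (g := b) (h := v) (i := j)).trans heb)
    change Y ⟶ D at d
    change biprod.lift e b = d ≫ biprod.lift f u at hd
    refine ⟨d, ?_, ?_⟩
    · change d ≫ f = e
      simpa using (hd =≫ biprod.fst).symm
    · change d ≫ u = b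
      simpa using (hd =≫ biprod.snd).symm
  · intro b
    change b ≫ w = 0 ↔ ∃ (e : Y ⟶ E) (b' : Y ⟶ B'), e ≫ v + b' ≫ j = b
    constructor
    · intro hb
      obtain ⟨k, hk⟩ := Triangle.coyoneda_exact₃ _ hT b hb
      change Y ⟶ E ⊞ B' at k
      change b = k ≫ biprod.desc v j at hk
      refine ⟨k ≫ biprod.fst, k ≫ biprod.snd, ?_⟩
      rw [hk, biprod.desc_eq]
      simp
    · rintro ⟨e, b', rfl⟩
      simp [Preadditive.add_comp, hvw, hjw]
  · intro d
    change (d ≫ f⟦(1 : ℤ)⟧' = 0 ∧ d ≫ u⟦(1 : ℤ)⟧' = 0) ↔ ∃ b : Y ⟶ B, b ≫ w = d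
    constructor
    · rintro ⟨h1, h2⟩
      obtain ⟨b, hb⟩ := Triangle.coyoneda_exact₁ _ hT d (by
        change d ≫ (biprod.lift f u)⟦(1 : ℤ)⟧' = 0
        rw [hl1, Preadditive.comp_add, reassoc_of% h1, reassoc_of% h2, zero_comp, zero_comp,
          add_zero])
      exact ⟨b, hb.symm⟩
    · rintro ⟨b, rfl⟩
      rw [← hf1, ← hu1, Category.assoc, Category.assoc, reassoc_of% h31, reassoc_of% h31]
      simp
  · intro b
    change b ≫ j⟦(1 : ℤ)⟧' = 0 ↔ ∃ d : Y ⟶ D⟦(1 : ℤ)⟧, d ≫ f⟦(1 : ℤ)⟧' = 0 ∧ d ≫ u⟦(1 : ℤ)⟧' = b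
    constructor
    · intro hb
      obtain ⟨d, hd⟩ := coyoneda_exact_shift _ hT
        (b ≫ (biprod.inr : B' ⟶ E ⊞ B')⟦(1 : ℤ)⟧') (by
          change (b ≫ (biprod.inr : B' ⟶ E ⊞ B')⟦(1 : ℤ)⟧') ≫ (biprod.desc v j)⟦(1 : ℤ)⟧' = 0
          rw [Category.assoc, ← Functor.map_comp, biprod.inr_desc, hb])
      change Y ⟶ D⟦(1 : ℤ)⟧ at d
      change b ≫ (biprod.inr : B' ⟶ E ⊞ B')⟦(1 : ℤ)⟧' = d ≫ (biprod.lift f u)⟦(1 : ℤ)⟧' at hd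
      refine ⟨d, ?_, ?_⟩
      · rw [← hf1, ← reassoc_of% hd, ← Functor.map_comp, biprod.inr_fst, Functor.map_zero,
          comp_zero]
      · rw [← hu1, ← reassoc_of% hd, ← Functor.map_comp, biprod.inr_snd, CategoryTheory.Functor.map_id,
          Category.comp_id]
    · rintro ⟨d, hd, rfl⟩
      have := d ≫= hsq1
      rw [Preadditive.comp_add, reassoc_of% hd, zero_comp, zero_add, comp_zero] at this
      rw [Category.assoc, this]

/-- A form of the octahedral axiom: if `E` is an extension of `B` by `A`, and `B` is an extension
of `M` by `B'`, then `E` is an extension of `M` by an extension of `B'` by `A`. The latter is the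
homotopy pullback of `E` and `B'` over `B`. -/
lemma IsExt.assoc (hft : IsFiniteType C) {A E B B' M : C} (h₁ : IsExt A E B)
    (h₂ : IsExt B' B M) : ∃ D : C, IsExt A D B' ∧ IsExt D E M := by
  obtain ⟨i, v, δ, hT₁⟩ := h₁
  obtain ⟨j, q, ε, hT₂⟩ := h₂
  -- the square formed by `D`, `E`, `B'` and `B` is homotopy cartesian
  obtain ⟨D, k, w, hD⟩ := distinguished_cocone_triangle₁ (biprod.desc v j)
  obtain ⟨f, u, rfl⟩ : ∃ f u, k = biprod.lift f u :=
    ⟨k ≫ biprod.fst, k ≫ biprod.snd, by ext <;> simp⟩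
  have hD' : Triangle.mk (biprod.lift u f) (biprod.desc j v) w ∈ distTriang C := by
    refine mk_distinguished_of_iso hD (Iso.refl _) (biprod.braiding _ _) (Iso.refl _) ?_ ?_ ?_
    · ext <;> simp
    · ext <;> simp
    · simp
  refine ⟨D, ?_, ?_⟩
  · obtain ⟨P, g, h, hP⟩ := distinguished_cocone_triangle u
    obtain ⟨e⟩ := nonempty_iso_cone hft hD' hP (rot_of_distTriang _ hT₁)
    have h1 := (IsExt.of_distinguished (inv_rot_of_distTriang _ hP))
    refine h1.of_iso ?_ (Iso.refl _) (Iso.refl _)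
    exact (shiftFunctor C (-1 : ℤ)).mapIso e ≪≫ (shiftEquiv C (1 : ℤ)).unitIso.symm.app A
  · obtain ⟨P, g, h, hP⟩ := distinguished_cocone_triangle f
    obtain ⟨e⟩ := nonempty_iso_cone hft hD hP hT₂
    exact (IsExt.of_distinguished hP).of_iso (Iso.refl _) (Iso.refl _) e

end Octahedral

/-! ### Towers of extensions and the complexity -/

section Towers

variable {C : Type u} [Category.{v} C] [Preadditive C] [HasZeroObject C]
  [HasShift C ℤ] [∀ n : ℤ, (shiftFunctor C n).Additive] [Pretriangulated C]

lemma exists_middle {A E B A' E' B' : C} {f : A ⟶ E} {g : E ⟶ B} {h : B ⟶ A⟦(1 : ℤ)⟧}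
    {f' : A' ⟶ E'} {g' : E' ⟶ B'} {h' : B' ⟶ A'⟦(1 : ℤ)⟧} (hT : Triangle.mk f g h ∈ distTriang C)
    (hT' : Triangle.mk f' g' h' ∈ distTriang C) (a : A ⟶ A') (b : B ⟶ B')
    (comm : h ≫ a⟦(1 : ℤ)⟧' = b ≫ h') :
    ∃ e : E ⟶ E', f ≫ e = a ≫ f' ∧ g ≫ b = e ≫ g' :=
  complete_distinguished_triangle_morphism₂ _ _ hT hT' a b comm

/-- An extension of retracts is a retract of an extension. -/
lemma IsExt.retract {A X B A' B' : C} (hX : IsExt A X B) (rA : Retract A A') (rB : Retract B B') :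
    ∃ E : C, IsExt A' E B' ∧ Nonempty (Retract X E) := by
  obtain ⟨f, g, h, hT⟩ := hX
  obtain ⟨E, f', g', hT'⟩ := distinguished_cocone_triangle₂ (rB.r ≫ h ≫ rA.i⟦(1 : ℤ)⟧')
  refine ⟨E, ⟨f', g', _, hT'⟩, ?_⟩
  -- the composite of the two induced maps on middle terms is the identity on `A` and on `B`
  obtain ⟨α, hα₁, hα₂⟩ := exists_middle hT hT' rA.i rB.i (by simp)
  obtain ⟨β, hβ₁, hβ₂⟩ := exists_middle hT' hT rA.r rB.r (by simp [← Functor.map_comp])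
  have hiso : IsIso (α ≫ β) := by
    have h1 : f ≫ α ≫ β = 𝟙 A ≫ f := by rw [reassoc_of% hα₁, hβ₁]; simp
    have h2 : g ≫ 𝟙 B = (α ≫ β) ≫ g := by
      rw [Category.assoc, ← hβ₂, ← reassoc_of% hα₂]; simp
    have h3 : h ≫ (𝟙 A)⟦(1 : ℤ)⟧' = 𝟙 B ≫ h := by simp
    have i1 : IsIso (𝟙 A) := inferInstance
    have i3 : IsIso (𝟙 B) := inferInstance
    exact isIso₂_of_isIso₁₃ (Triangle.homMk (Triangle.mk f g h) (Triangle.mk f g h)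
      (𝟙 A) (α ≫ β) (𝟙 B) h1 h2 h3) hT hT i1 i3
  exact ⟨⟨α, β ≫ inv (α ≫ β), by rw [← Category.assoc, IsIso.hom_inv_id]⟩⟩

/-- A retract is a direct summand. -/
lemma exists_iso_biprod_of_retract {X Y : C} (r : Retract X Y) :
    ∃ N : C, Nonempty (Y ≅ X ⊞ N) := by
  obtain ⟨Z, g, h, hT⟩ := distinguished_cocone_triangle r.i
  have h31 : h ≫ r.i⟦(1 : ℤ)⟧' = 0 := comp_distTriang_mor_zero₃₁ _ hT
  have h0 : h = 0 := by
    have := h31 =≫ r.r⟦(1 : ℤ)⟧'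
    rwa [Category.assoc, ← Functor.map_comp, r.retract, CategoryTheory.Functor.map_id,
      Category.comp_id, zero_comp] at this
  obtain ⟨e, -⟩ := exists_iso_binaryBiproduct_of_distTriang _ hT h0
  exact ⟨Z, ⟨e⟩⟩

lemma IsExt.shift {A E B : C} (h : IsExt A E B) (k : ℤ) : IsExt (A⟦k⟧) (E⟦k⟧) (B⟦k⟧) := by
  obtain ⟨f, g, h, hT⟩ := h
  exact IsExt.of_distinguished (Triangle.shift_distinguished _ hT k)

lemma IsExt.map (F : C ⥤ C) [F.CommShift ℤ] [F.IsTriangulated] {A E B : C} (h : IsExt A E B) :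
    IsExt (F.obj A) (F.obj E) (F.obj B) := by
  obtain ⟨f, g, h, hT⟩ := h
  exact IsExt.of_distinguished (F.map_distinguished _ hT)

lemma isExt_of_isZero_left {A X : C} (hA : IsZero A) : IsExt A X X :=
  (IsExt.of_distinguished (contractible_distinguished₁ X)).of_iso
    ((isZero_zero C).iso hA) (Iso.refl _) (Iso.refl _)

lemma IsExt.nonempty_iso_of_isZero {A E B : C} (h : IsExt A E B) (hB : IsZero B) :
    Nonempty (A ≅ E) := by
  obtain ⟨f, g, h, hT⟩ := h
  have : IsIso f := (Triangle.isZero₃_iff_isIso₁ _ hT).1 hB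
  exact ⟨asIso f⟩

/-- `Tower M [nₚ, …, n₁] X`: the object `X` is obtained from `0` by successive extensions by the
shifts `M⟦n₁⟧, …, M⟦nₚ⟧`. The head of the list is the last step. -/
inductive Tower (M : C) : List ℤ → C → Prop
  | nil {X : C} (hX : IsZero X) : Tower M [] X
  | cons {A X : C} {n : ℤ} {l : List ℤ} (hA : Tower M l A) (h : IsExt A X (M⟦n⟧)) :
      Tower M (n :: l) X

lemma Tower.of_iso {M : C} {l : List ℤ} {X Y : C} (h : Tower M l X) (e : X ≅ Y) :
    Tower M l Y := by
  cases h with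
  | nil hX => exact .nil (hX.of_iso e.symm)
  | cons hA h => exact .cons hA (h.of_iso (Iso.refl _) e (Iso.refl _))

lemma Tower.shift {M : C} {l : List ℤ} {X : C} (h : Tower M l X) (k : ℤ) :
    Tower M (l.map (· + k)) (X⟦k⟧) := by
  induction h with
  | nil hX => exact .nil ((shiftFunctor C k).map_isZero hX)
  | cons hA h ih =>
    exact .cons ih ((h.shift k).of_iso (Iso.refl _) (Iso.refl _)
      ((shiftFunctorAdd C _ k).symm.app M))

lemma Tower.map (F : C ⥤ C) [F.CommShift ℤ] [F.IsTriangulated] {M : C} {l : List ℤ} {X : C}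
    (h : Tower M l X) : Tower (F.obj M) l (F.obj X) := by
  induction h with
  | nil hX => exact .nil (F.map_isZero hX)
  | cons hA h ih =>
    exact .cons ih ((h.map F).of_iso (Iso.refl _) (Iso.refl _) ((F.commShiftIso _).app M))

lemma tower_self (M : C) : Tower M [0] M :=
  .cons (.nil (isZero_zero C)) ((isExt_of_isZero_left (isZero_zero C)).of_iso (Iso.refl _)
    (Iso.refl _) ((shiftFunctorZero C ℤ).symm.app M))

/-- Towers can be concatenated along an extension. -/
lemma Tower.ext [Linear ℂ C] (hft : IsFiniteType C) {M A E B : C} {l l' : List ℤ}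
    (hA : Tower M l A) (hB : Tower M l' B) (h : IsExt A E B) : Tower M (l' ++ l) E := by
  induction hB generalizing E with
  | nil hB =>
    obtain ⟨e⟩ := IsExt.nonempty_iso_of_isZero h hB
    exact hA.of_iso e
  | cons _ hB' ih =>
    obtain ⟨D, h₁, h₂⟩ := h.assoc hft hB'
    exact .cons (ih h₁) h₂

/-- The weight `∑ exp(nᵢ t)` of a tower with shifts `nᵢ`. -/
noncomputable def cost (t : ℝ) (l : List ℤ) : ℝ≥0∞ :=
  (l.map fun n : ℤ => ENNReal.ofReal (Real.exp ((n : ℝ) * t))).sum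

@[simp] lemma cost_nil (t : ℝ) : cost t [] = 0 := rfl

@[simp] lemma cost_cons (t : ℝ) (n : ℤ) (l : List ℤ) :
    cost t (n :: l) = ENNReal.ofReal (Real.exp ((n : ℝ) * t)) + cost t l := by simp [cost]

@[simp] lemma cost_append (t : ℝ) (l l' : List ℤ) : cost t (l ++ l') = cost t l + cost t l' := by
  simp [cost]

lemma cost_shift (t : ℝ) (k : ℤ) (l : List ℤ) :
    cost t (l.map (· + k)) = ENNReal.ofReal (Real.exp ((k : ℝ) * t)) * cost t l := by
  induction l with
  | nil => simp
  | cons n l ih =>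
    rw [List.map_cons, cost_cons, cost_cons, ih, mul_add, ← ENNReal.ofReal_mul (Real.exp_nonneg _),
      ← Real.exp_add]
    congr 4
    push_cast
    ring

lemma cost_ne_top (t : ℝ) (l : List ℤ) : cost t l ≠ ⊤ := by
  induction l with
  | nil => simp
  | cons n l ih => simp [ih]

/-- Substituting a tower for `M` over `G` into a tower over `M` multiplies the weights. -/
lemma Tower.comp [Linear ℂ C] (hft : IsFiniteType C) (t : ℝ) {G M B X : C} {l l' : List ℤ}
    (h : Tower M l X) (r : Retract M B) (hB : Tower G l' B) :
    ∃ (Y : C) (l'' : List ℤ), Nonempty (Retract X Y) ∧ Tower G l'' Y ∧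
      cost t l'' = cost t l * cost t l' := by
  induction h with
  | @nil X hX => exact ⟨X, [], ⟨Retract.refl X⟩, .nil hX, by simp⟩
  | @cons A X n l hA h ih =>
    obtain ⟨A', l₁, ⟨rA⟩, hA', hl₁⟩ := ih
    obtain ⟨E, hE, rE⟩ := h.retract rA (r.map (shiftFunctor C n))
    refine ⟨E, _, rE, hA'.ext hft (hB.shift n) hE, ?_⟩
    rw [cost_append, cost_shift, hl₁, cost_cons, add_mul]

/-- The pairs `(l, Y)` where `Y` is built by a tower over `G` with shifts `l` and has `X` as a
retract. -/
def Resolution (G X : C) : Type u :=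
  {a : List ℤ × C // Nonempty (Retract X a.2) ∧ Tower G a.1 a.2}

/-- The infimum of the weights of the towers producing `X` as a retract. This is the complexity
`δ_t(G, X)` when `G` is a split-generator, see `complexity_eq_towerCost`. -/
noncomputable def towerCost (t : ℝ) (G X : C) : ℝ≥0∞ :=
  ⨅ a : Resolution G X, cost t a.1.1

lemma towerCost_le (t : ℝ) {G X Y : C} {l : List ℤ} (r : Retract X Y) (h : Tower G l Y) :
    towerCost t G X ≤ cost t l :=
  iInf_le_of_le (⟨(l, Y), ⟨r⟩, h⟩ : Resolution G X) le_rfl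

/-- The objects that are retracts of towers over `G` form a thick subcategory. -/
lemma isThick_resolution [Linear ℂ C] (hft : IsFiniteType C) (G : C) :
    IsThick C {X : C | Nonempty (Resolution G X)} where
  mem_of_iso := by
    rintro X Y e ⟨⟨⟨l, Z⟩, ⟨r⟩, h⟩⟩
    exact ⟨⟨(l, Z), ⟨(Retract.ofIso e.symm).trans r⟩, h⟩⟩
  shift_mem := by
    rintro X n ⟨⟨⟨l, Z⟩, ⟨r⟩, h⟩⟩
    exact ⟨⟨(_, Z⟦n⟧), ⟨r.map (shiftFunctor C n)⟩, h.shift n⟩⟩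
  cone_mem := by
    rintro T hT ⟨⟨⟨l, Z⟩, ⟨r⟩, h⟩⟩ ⟨⟨⟨l', Z'⟩, ⟨r'⟩, h'⟩⟩
    obtain ⟨E, hE, rE⟩ := (IsExt.of_distinguished (rot_of_distTriang _ hT)).retract r'
      (r.map (shiftFunctor C (1 : ℤ)))
    exact ⟨⟨(_, E), rE, h'.ext hft (h.shift 1) hE⟩⟩
  summand_mem := by
    rintro X Y ⟨⟨⟨l, Z⟩, ⟨r⟩, h⟩⟩
    exact ⟨⟨(l, Z), ⟨Retract.trans ⟨biprod.inl, biprod.fst, by simp⟩ r⟩, h⟩⟩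

lemma nonempty_resolution [Linear ℂ C] (hft : IsFiniteType C) {G : C} (hG : IsSplitGenerator C G)
    (X : C) : Nonempty (Resolution G X) :=
  hG X _ ⟨isThick_resolution hft G, ⟨⟨([0], G), ⟨Retract.refl G⟩, tower_self G⟩⟩⟩

lemma towerCost_ne_top [Linear ℂ C] (hft : IsFiniteType C) {G : C} (hG : IsSplitGenerator C G)
    (t : ℝ) (X : C) : towerCost t G X ≠ ⊤ := by
  obtain ⟨⟨⟨l, Y⟩, ⟨r⟩, h⟩⟩ := nonempty_resolution hft hG X
  exact ne_top_of_le_ne_top (cost_ne_top t l) (towerCost_le t r h)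

/-- Both factors have to be realised by towers, since `0 * ⊤ = 0` in `ℝ≥0∞`. -/
lemma towerCost_le_mul [Linear ℂ C] (hft : IsFiniteType C) (t : ℝ) {G M X : C}
    (h₁ : Nonempty (Resolution M X)) (h₂ : Nonempty (Resolution G M)) :
    towerCost t G X ≤ towerCost t M X * towerCost t G M := by
  refine ENNReal.le_iInf_mul_iInf ⟨h₁.some, cost_ne_top _ _⟩ ⟨h₂.some, cost_ne_top _ _⟩ ?_
  rintro ⟨⟨l, Y⟩, ⟨r⟩, h⟩ ⟨⟨l', B⟩, ⟨r'⟩, h'⟩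
  obtain ⟨Z, l'', ⟨r''⟩, hZ, hl⟩ := h.comp hft t r' h'
  exact (towerCost_le t (r.trans r'') hZ).trans hl.le

section Map

variable (F : C ⥤ C) [F.CommShift ℤ] [F.IsTriangulated]

/-- Image of a tower under a triangulated functor. -/
def Resolution.map {G X : C} (a : Resolution G X) : Resolution (F.obj G) (F.obj X) :=
  ⟨(a.1.1, F.obj a.1.2), a.2.1.map fun r => r.map F, a.2.2.map F⟩

lemma towerCost_map_le (t : ℝ) (G X : C) :
    towerCost t (F.obj G) (F.obj X) ≤ towerCost t G X :=
  le_iInf fun a => iInf_le_of_le (a.map F) le_rfl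

lemma nonempty_resolution_iter {G X : C} (h : Nonempty (Resolution G X)) (n : ℕ) :
    Nonempty (Resolution ((iter C F n).obj G) ((iter C F n).obj X)) := by
  induction n with
  | zero => exact h
  | succ n ih => exact ih.map (Resolution.map F)

lemma towerCost_iter_le (t : ℝ) (G X : C) (n : ℕ) :
    towerCost t ((iter C F n).obj G) ((iter C F n).obj X) ≤ towerCost t G X := by
  induction n with
  | zero => exact le_rfl
  | succ n ih => exact (towerCost_map_le F t _ _).trans ih

lemma iter_add_obj (m n : ℕ) (X : C) :
    (iter C F (m + n)).obj X = (iter C F m).obj ((iter C F n).obj X) := by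
  induction m with
  | zero => rw [Nat.zero_add]; rfl
  | succ m ih =>
    rw [Nat.succ_add]
    exact congrArg F.obj ih

end Map

/-- Towers indexed by `Fin`, as in the definition of the complexity, give list-indexed towers. -/
lemma exists_tower_of_fin (t : ℝ) {M : C} : ∀ (p : ℕ) (n : Fin p → ℤ) (A : Fin (p + 1) → C),
    IsZero (A 0) → (∀ i : Fin p, IsExt (A i.castSucc) (A i.succ) (M⟦n i⟧)) →
    ∃ l : List ℤ, Tower M l (A (Fin.last p)) ∧
      cost t l = ∑ i : Fin p, ENNReal.ofReal (Real.exp ((n i : ℝ) * t))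
  | 0, _, _, h0, _ => ⟨[], .nil h0, by simp⟩
  | p + 1, n, A, h0, h => by
    obtain ⟨l, hl, hc⟩ := exists_tower_of_fin t p (n ∘ Fin.castSucc) (A ∘ Fin.castSucc) h0
      (fun i => h i.castSucc)
    refine ⟨n (Fin.last p) :: l, .cons hl (h (Fin.last p)), ?_⟩
    rw [cost_cons, hc, Fin.sum_univ_castSucc, add_comm]
    rfl

lemma Tower.exists_fin (t : ℝ) {M X : C} {l : List ℤ} (h : Tower M l X) :
    ∃ (n : Fin l.length → ℤ) (A : Fin (l.length + 1) → C), IsZero (A 0) ∧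
      A (Fin.last l.length) = X ∧
      (∀ i : Fin l.length, IsExt (A i.castSucc) (A i.succ) (M⟦n i⟧)) ∧
      cost t l = ∑ i : Fin l.length, ENNReal.ofReal (Real.exp ((n i : ℝ) * t)) := by
  induction h with
  | @nil X hX => exact ⟨Fin.elim0, fun _ => X, hX, rfl, fun i => i.elim0, by simp⟩
  | @cons B X n l hB h ih =>
    obtain ⟨n', A, h0, rfl, hA, hc⟩ := ih
    refine ⟨Fin.snoc (α := fun _ => ℤ) n' n, Fin.snoc (α := fun _ => C) A X, ?_, ?_, ?_, ?_⟩
    · have : (0 : Fin (l.length + 1 + 1)) = Fin.castSucc 0 := rfl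
      rw [this]
      simpa only [Fin.snoc_castSucc] using h0
    · exact Fin.snoc_last (α := fun _ => C) X A
    · intro i
      induction i using Fin.lastCases with
      | last =>
        have hX : Fin.snoc (α := fun _ => C) A X (Fin.last l.length).succ = X :=
          Fin.snoc_last (α := fun _ => C) X A
        rw [hX]
        simpa only [Fin.snoc_castSucc, Fin.snoc_last] using h
      | cast i =>
        rw [Fin.succ_castSucc]
        simpa only [Fin.snoc_castSucc] using hA i
    · rw [cost_cons, hc]
      refine Eq.trans ?_ (Fin.sum_univ_castSucc _).symm
      simp only [Fin.snoc_castSucc, Fin.snoc_last]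
      rw [add_comm]

/-- The complexity of `X` is computed by list-indexed towers and retracts. For `X` zero the empty
tower has weight `0`; otherwise no tower producing `X` is empty, in accordance with `p ≥ 1`. -/
lemma complexity_eq_towerCost {G : C}
    (hG : IsSplitGenerator C G) (t : ℝ) (X : C) : complexity C t G X = towerCost t G X := by
  rw [complexity]
  split_ifs with hX hmem
  · have := towerCost_le t (Retract.refl X) (Tower.nil (M := G) hX)
    exact (le_antisymm this zero_le).symm
  · apply le_antisymm
    · refine le_iInf ?_
      rintro ⟨⟨l, Y⟩, ⟨r⟩, h⟩
      obtain ⟨n, A, h0, hY, hA, hc⟩ := h.exists_fin t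
      obtain ⟨N, ⟨e⟩⟩ := exists_iso_biprod_of_retract r
      refine sInf_le ⟨l.length, ?_, n, A, N, h0, ⟨eqToIso hY ≪≫ e⟩, hA, hc⟩
      rw [List.length_pos_iff]
      rintro rfl
      cases h with
      | nil hY0 =>
        refine hX ?_
        rw [IsZero.iff_id_eq_zero, ← r.retract, hY0.eq_of_tgt r.i 0, zero_comp]
    · refine le_sInf ?_
      rintro c ⟨p, -, n, A, N, h0, ⟨e⟩, hA, rfl⟩
      obtain ⟨l, hl, hc⟩ := exists_tower_of_fin t p n A h0 hA
      rw [← hc]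
      exact towerCost_le t (Retract.trans ⟨biprod.inl, biprod.fst, by simp⟩
        (Retract.ofIso e.symm)) hl
  · exact absurd (hG X) hmem

end Towers

/-! ### The entropy -/

section Entropy

variable {C : Type u} [Category.{v} C] [Preadditive C] [HasZeroObject C]
  [HasShift C ℤ] [∀ n : ℤ, (shiftFunctor C n).Additive] [Pretriangulated C] [Linear ℂ C]

/-- `δ(G, Fⁿ X) ≤ δ(M, X) δ(G, Fⁿ M)`: apply `Fⁿ` to a tower for `X` over `M`, and substitute a
tower for `Fⁿ M` over `G`. -/
lemma towerCost_iter_le_mul (hft : IsFiniteType C) (F : C ⥤ C) [F.CommShift ℤ] [F.IsTriangulated]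
    {G : C} (hG : IsSplitGenerator C G) (t : ℝ) (M X : C) (hM : IsSplitGenerator C M) (n : ℕ) :
    towerCost t G ((iter C F n).obj X) ≤ towerCost t M X * towerCost t G ((iter C F n).obj M) :=
  (towerCost_le_mul hft t (nonempty_resolution_iter F (nonempty_resolution hft hM X) n)
    (nonempty_resolution hft hG _)).trans (mul_le_mul_left (towerCost_iter_le F t M X n) _)

end Entropy

/-- The entropy may be computed using any second split-generator `G'`:
the sequence `(1/n) log δ_(T,t)(G, Fⁿ G')` converges to `h_t(F)`. -/
theorem statement_7 {C : Type u} [Category.{v} C] [Preadditive C] [HasZeroObject C]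
    [HasShift C ℤ] [∀ n : ℤ, (shiftFunctor C n).Additive] [Pretriangulated C] [Linear ℂ C]
    (hC : ∃ X : C, ¬ IsZero X) (hft : IsFiniteType C)
    (F : C ⥤ C) [F.Additive] [F.Linear ℂ] [F.CommShift ℤ] [F.IsTriangulated]
    (G G' : C) (hG : IsSplitGenerator C G) (hG' : IsSplitGenerator C G')
    (hF : ∀ n : ℕ, ¬ IsZero ((iter C F n).obj G)) (t : ℝ) :
    Tendsto (fun m : ℕ =>
        (((m : ℝ)⁻¹ : ℝ) : EReal) * (complexity C t G ((iter C F m).obj G')).log)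
      atTop (nhds (entropy C F G t)) := by
  have h1 := fun (X : C) => complexity_eq_towerCost hG t X
  simp only [entropy, h1]
  refine tendsto_of_submul (fun n => towerCost_ne_top hft hG t _) (fun m n => ?_)
    (towerCost_ne_top hft hG t G') (towerCost_ne_top hft hG' t G)
    (fun n => towerCost_iter_le_mul hft F hG t G G' hG n)
    (fun n => towerCost_iter_le_mul hft F hG t G' G hG' n)
  rw [iter_add_obj, mul_comm]
  exact towerCost_iter_le_mul hft F hG t G _ hG m

end CatEntropy
end
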